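/- arXiv:math/0111189 — 3 statements merged into one kernel-verified Lean document; each statement's English description precedes it below -/
import Mathlib

section
/- Let A and B be C*-algebras, let e ∈ A and f ∈ B be projections, and set I = {a * e : a ∈ A} and J = {b * f : b ∈ B}. Suppose φ : I → J is a bijective linear map which is completely isometric. Then the element u := φ(e) satisfies: (1) u* * u = f, and u * u* is a projection in B (so u is a partial isometry with initial projection f); (2) the map π : I → B defined by π(x) = φ(x) * u* is multiplicative (π(x * y) = π(x) * π(y) for all x, y ∈ I), is completely isometric, and its range equals {b * u* : b ∈ B} = {b * (u * u*) : b ∈ B}, which is a norm-closed left ideal of B admitting u * u* as a right identity; (3) φ(x) = π(x) * u for every x ∈ I. -/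
open Filter Topology

/-- The canonical C*-norm of an `n × n` matrix over a (possibly non-unital) C*-algebra `A`:
the operator norm of left multiplication on the Hilbert `A`-module of columns `Aⁿ`. -/
noncomputable def cnorm {A : Type*} [NonUnitalCStarAlgebra A] {n : ℕ}
    (x : Matrix (Fin n) (Fin n) A) : ℝ :=
  sSup {r : ℝ | ∃ v : Fin n → A, ‖∑ i, star (v i) * v i‖ ≤ 1 ∧
    r = Real.sqrt ‖∑ i, star (x.mulVec v i) * (x.mulVec v i)‖}

/-- A map `T` defined on a subspace `V` of a C*-algebra `A`, with values in a C*-algebra `B`,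
is completely isometric if for every `n`, applying `T` entrywise to `n × n` matrices with
entries in `V` preserves the canonical C*-norm of matrices. -/
def IsCompletelyIsometric {A B : Type*} [NonUnitalCStarAlgebra A] [NonUnitalCStarAlgebra B]
    {V : Submodule ℂ A} (T : V → B) : Prop :=
  ∀ (n : ℕ) (x : Matrix (Fin n) (Fin n) V),
    cnorm (x.map T) = cnorm (x.map ((↑) : V → A))

/-- The left ideal `{a * e : a ∈ A}` of a C*-algebra `A`, as a `ℂ`-submodule. -/
def principalLeftIdeal (A : Type*) [NonUnitalCStarAlgebra A] (e : A) : Submodule ℂ A where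
  carrier := {x | ∃ a : A, x = a * e}
  add_mem' := by rintro x y ⟨a, rfl⟩ ⟨b, rfl⟩; exact ⟨a + b, (add_mul a b e).symm⟩
  zero_mem' := ⟨0, (zero_mul e).symm⟩
  smul_mem' := by rintro c x ⟨a, rfl⟩; exact ⟨c • a, (smul_mul_assoc c a e).symm⟩


section BSHelpers

theorem bs_mem_iff {A : Type*} [NonUnitalCStarAlgebra A] {e : A} (he₂ : e * e = e) {x : A} :
    x ∈ principalLeftIdeal A e ↔ x * e = x := by
  constructor
  · rintro ⟨a, rfl⟩
    rw [mul_assoc, he₂]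
  · intro h
    exact ⟨x, h.symm⟩

/-- Left multiplication on the left ideal. -/
def bsLm {A : Type*} [NonUnitalCStarAlgebra A] {e : A} (a : A) (x : principalLeftIdeal A e) :
    principalLeftIdeal A e :=
  ⟨a * x, by
    obtain ⟨b, hb⟩ := x.2
    exact ⟨a * b, by rw [hb, mul_assoc]⟩⟩

theorem bsLm_coe {A : Type*} [NonUnitalCStarAlgebra A] {e : A} (a : A)
    (x : principalLeftIdeal A e) : (bsLm a x : A) = a * x := rfl

theorem bs_star_mul_self_zero {B : Type*} [NonUnitalCStarAlgebra B] {z : B}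
    (h : star z * z = 0) : z = 0 := CStarRing.star_mul_self_eq_zero_iff z |>.1 h

theorem bs_proj_norm {A : Type*} [NonUnitalCStarAlgebra A] {e : A} (he₁ : star e = e)
    (he₂ : e * e = e) : ‖e‖ ≤ 1 := by
  have h : ‖e‖ * ‖e‖ = ‖e‖ := by
    rw [← CStarRing.norm_star_mul_self (x := e), he₁, he₂]
  by_contra hc
  push Not at hc
  nlinarith

theorem bs_mono {A : Type*} [NonUnitalCStarAlgebra A] [PartialOrder A] [StarOrderedRing A]
    {e q : A} (he₁ : star e = e) (he₂ : e * e = e) (hq : star q = q) (hqe : e * q * e = q)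
    {c : ℝ} (hc : ‖q‖ ≤ c) : q ≤ c • e := by
  have h := CStarAlgebra.star_left_conjugate_le_norm_smul (a := e) (b := q) hq
  rw [he₁, he₂, hqe] at h
  refine h.trans ?_
  have h0 : 0 ≤ e := by
    have := star_mul_self_nonneg e
    rwa [he₁, he₂] at this
  exact smul_le_smul_of_nonneg_right hc h0

/-- corner absorbs -/
theorem bs_corner {B : Type*} [NonUnitalCStarAlgebra B] {f : B} (hf₁ : star f = f)
    {x y : B} (hx : x * f = x) (hy : y * f = y) : f * (star x * y) * f = star x * y := by
  have : f * star x = star x := by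
    conv_rhs => rw [← hx, star_mul, hf₁]
  rw [← mul_assoc, this, mul_assoc, hy]

theorem bs_le_of_norm {B : Type*} [NonUnitalCStarAlgebra B] [PartialOrder B] [StarOrderedRing B]
    {f : B} (hf₁ : star f = f) (hf₂ : f * f = f) {x x' : B} (hx : x * f = x) (hx' : x' * f = x')
    (h : ∀ y : B, y * f = y → ‖star x * x + star y * y‖ = ‖star x' * x' + star y * y‖) :
    star x * x ≤ star x' * x' := by
  set q := star x' * x' with hq
  set p := star x * x with hp
  have hqs : star q = q := by simp [hq]
  have hps : star p = p := by simp [hp]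
  have hqf : f * q * f = q := bs_corner hf₁ hx' hx'
  have hpf : f * p * f = p := bs_corner hf₁ hx hx
  have h1 : q ≤ ‖q‖ • f := bs_mono hf₁ hf₂ hqs hqf le_rfl
  set r := ‖q‖ • f - q with hr
  have hr0 : 0 ≤ r := sub_nonneg.2 h1
  have hrf : r * f = r := by
    have : q * f = q := by rw [hq, mul_assoc, hx']
    rw [hr, sub_mul, smul_mul_assoc, hf₂, this]
  have hfr : f * r = r := by
    have := congrArg star hrf
    rwa [star_mul, hf₁, (IsSelfAdjoint.of_nonneg hr0).star_eq] at this
  set y := CFC.sqrt r with hy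
  have hyy : star y * y = r := by
    rw [(IsSelfAdjoint.of_nonneg (CFC.sqrt_nonneg r)).star_eq]
    exact CFC.sqrt_mul_sqrt_self r hr0
  have hyf : y * f = y := by
    have : star (y - y * f) * (y - y * f) = 0 := by
      have e1 : star (y - y * f) * (y - y * f)
          = star y * y - star y * y * f - f * (star y * y) + f * (star y * y) * f := by
        simp only [star_sub, star_mul, hf₁]
        noncomm_ring
      rw [e1, hyy, hfr, hrf]
      abel
    exact (sub_eq_zero.1 (bs_star_mul_self_zero this)).symm
  have h2 := h y hyf
  rw [hyy] at h2
  have h3 : q + r = ‖q‖ • f := by rw [hr]; abel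
  rw [h3] at h2
  have h4 : ‖p + r‖ ≤ ‖q‖ := by
    rw [h2, norm_smul, norm_norm]
    exact mul_le_of_le_one_right (norm_nonneg _) (bs_proj_norm hf₁ hf₂)
  have h5 : p + r ≤ ‖q‖ • f := by
    refine bs_mono hf₁ hf₂ ?_ ?_ h4
    · rw [star_add, hps, (IsSelfAdjoint.of_nonneg hr0).star_eq]
    · rw [mul_add, add_mul, hpf, hfr, hrf]
  rw [← h3] at h5
  exact le_of_add_le_add_right h5

theorem bs_eq_of_norm {B : Type*} [NonUnitalCStarAlgebra B]
    {f : B} (hf₁ : star f = f) (hf₂ : f * f = f) {x x' : B} (hx : x * f = x) (hx' : x' * f = x')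
    (h : ∀ y : B, y * f = y → ‖star x * x + star y * y‖ = ‖star x' * x' + star y * y‖) :
    star x * x = star x' * x' := by
  let _ := CStarAlgebra.spectralOrder B
  have := CStarAlgebra.spectralOrderedRing B
  exact le_antisymm (bs_le_of_norm hf₁ hf₂ hx hx' h)
    (bs_le_of_norm hf₁ hf₂ hx' hx fun y hy => (h y hy).symm)

/-- polarization for an additive map preserving `x ↦ x* x`. -/
theorem bs_polar {V B : Type*} [AddCommGroup V] [Module ℂ V] [NonUnitalCStarAlgebra B]
    (S T : V →ₗ[ℂ] B) (h : ∀ x, star (S x) * S x = star (T x) * T x) (x y : V) :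
    star (S x) * S y = star (T x) * T y := by
  have h1 := h (x + y)
  have h2 := h (x + Complex.I • y)
  simp only [map_add, map_smul, star_add, star_smul, add_mul, mul_add, h x, h y, smul_mul_assoc,
    mul_smul_comm] at h1 h2
  have h1' : star (S x) * S y + star (S y) * S x = star (T x) * T y + star (T y) * T x := by
    rw [← sub_eq_zero] at h1 ⊢
    rw [← h1]
    abel
  have h2' : Complex.I • (star (S x) * S y) - Complex.I • (star (S y) * S x)
      = Complex.I • (star (T x) * T y) - Complex.I • (star (T y) * T x) := by
    rw [← sub_eq_zero] at h2 ⊢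
    rw [← h2]
    simp
    abel
  rw [← smul_sub, ← smul_sub] at h2'
  have h3 := smul_right_injective B Complex.I_ne_zero h2'
  have h4 : (2 : ℂ) • (star (S x) * S y) = (2 : ℂ) • (star (T x) * T y) := by
    rw [two_smul, two_smul]
    rw [← sub_eq_zero] at h1' h3 ⊢
    rw [← add_zero (0 : B)]
    nth_rewrite 1 [← h1']
    rw [← h3]
    abel
  exact smul_right_injective B two_ne_zero h4

end BSHelpers

section BSMain

/-- Left multiplication by an element of the unitization on the left ideal. -/
noncomputable def bsV {A : Type*} [NonUnitalCStarAlgebra A] {e : A} (U : Unitization ℂ A) :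
    principalLeftIdeal A e →ₗ[ℂ] principalLeftIdeal A e where
  toFun x := U.fst • x + bsLm U.snd x
  map_add' x y := by
    apply Subtype.ext
    simp only [Submodule.coe_add, Submodule.coe_smul, bsLm_coe, smul_add, mul_add]
    abel
  map_smul' c x := by
    apply Subtype.ext
    simp only [Submodule.coe_add, Submodule.coe_smul, bsLm_coe, smul_add, mul_smul_comm,
      RingHom.id_apply, smul_comm c]

theorem bsV_inr {A : Type*} [NonUnitalCStarAlgebra A] {e : A} (U : Unitization ℂ A)
    (x : principalLeftIdeal A e) :
    ((bsV U x : A) : Unitization ℂ A) = U * ((x : A) : Unitization ℂ A) := by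
  have : (bsV U x : A) = U.fst • (x : A) + U.snd * (x : A) := rfl
  rw [this]
  ext <;> simp

theorem bsV_eq {A : Type*} [NonUnitalCStarAlgebra A] {e : A} {U : Unitization ℂ A}
    {x y : principalLeftIdeal A e}
    (h : U * ((x : A) : Unitization ℂ A) = ((y : A) : Unitization ℂ A)) : bsV U x = y := by
  apply Subtype.ext
  apply Unitization.inr_injective (R := ℂ)
  rw [bsV_inr, h]

variable {A B : Type*} [NonUnitalCStarAlgebra A] [NonUnitalCStarAlgebra B]

/-- The two-column norm condition. -/
def BSNorm {e : A} {f : B} (φ : principalLeftIdeal A e ≃ₗ[ℂ] principalLeftIdeal B f) : Prop :=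
  ∀ x y : principalLeftIdeal A e,
    ‖star (φ x : B) * (φ x : B) + star (φ y : B) * (φ y : B)‖
      = ‖star (x : A) * (x : A) + star (y : A) * (y : A)‖

theorem BSNorm.symm {e : A} {f : B} {φ : principalLeftIdeal A e ≃ₗ[ℂ] principalLeftIdeal B f}
    (h : BSNorm φ) : BSNorm φ.symm := by
  intro x y
  have := h (φ.symm x) (φ.symm y)
  simpa using this.symm

theorem bs_unitary {e : A} {f : B} (hf₁ : star f = f) (hf₂ : f * f = f)
    {φ : principalLeftIdeal A e ≃ₗ[ℂ] principalLeftIdeal B f} (h : BSNorm φ)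
    {U : Unitization ℂ A} (hU : U ∈ unitary (Unitization ℂ A)) (x y : principalLeftIdeal A e) :
    star (φ (bsV U x) : B) * (φ y : B) = star (φ x : B) * (φ (bsV (star U) y) : B) := by
  have hsq : ∀ x : principalLeftIdeal A e,
      star (bsV U x : A) * (bsV U x : A) = star (x : A) * (x : A) := by
    intro x
    apply Unitization.inr_injective (R := ℂ)
    rw [Unitization.inr_mul, Unitization.inr_mul, Unitization.inr_star, Unitization.inr_star,
      bsV_inr, star_mul, mul_assoc, ← mul_assoc (star U), Unitary.star_mul_self_of_mem hU, one_mul]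
  have key := bs_polar
    ((principalLeftIdeal B f).subtype ∘ₗ φ.toLinearMap ∘ₗ bsV U)
    ((principalLeftIdeal B f).subtype ∘ₗ φ.toLinearMap) (by
      intro x
      refine bs_eq_of_norm hf₁ hf₂ ((bs_mem_iff hf₂).1 (φ (bsV U x)).2)
        ((bs_mem_iff hf₂).1 (φ x).2) ?_
      intro y hy
      have h1 := h (bsV U x) (φ.symm ⟨y, (bs_mem_iff hf₂).2 hy⟩)
      have h2 := h x (φ.symm ⟨y, (bs_mem_iff hf₂).2 hy⟩)
      rw [hsq, ← h2] at h1
      simpa using h1) x (bsV (star U) y)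
  have hy : bsV U (bsV (star U) y) = y := by
    apply bsV_eq
    rw [bsV_inr, ← mul_assoc, Unitary.mul_star_self_of_mem hU, one_mul]
  simpa [hy] using key

theorem bs_M1 {e : A} {f : B} (hf₁ : star f = f) (hf₂ : f * f = f)
    {φ : principalLeftIdeal A e ≃ₗ[ℂ] principalLeftIdeal B f} (h : BSNorm φ)
    (a : A) (x y : principalLeftIdeal A e) :
    star (φ (bsLm a x) : B) * (φ y : B) = star (φ x : B) * (φ (bsLm (star a) y) : B) := by
  have gen : ∀ c : Unitization ℂ A,
      star (φ (bsV c x) : B) * (φ y : B) = star (φ x : B) * (φ (bsV (star c) y) : B) := by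
    intro c
    have hc : c ∈ Submodule.span ℂ (unitary (Unitization ℂ A) : Set (Unitization ℂ A)) := by
      rw [CStarAlgebra.span_unitary]; trivial
    induction hc using Submodule.span_induction with
    | mem U hU => exact bs_unitary hf₁ hf₂ h hU x y
    | zero =>
      have h0 : ∀ x : principalLeftIdeal A e, bsV (0 : Unitization ℂ A) x = 0 := fun x =>
        bsV_eq (by simp)
      simp [h0]
    | add c d _ _ hc hd =>
      have h0 : ∀ (c d : Unitization ℂ A) (x : principalLeftIdeal A e),
          bsV (c + d) x = bsV c x + bsV d x := fun c d x =>
        bsV_eq (by simp [bsV_inr, add_mul])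
      rw [star_add, h0, h0]
      simp only [map_add, Submodule.coe_add, star_add, add_mul, mul_add, hc, hd]
    | smul r c _ hc =>
      have h0 : ∀ (r : ℂ) (c : Unitization ℂ A) (x : principalLeftIdeal A e),
          bsV (r • c) x = r • bsV c x := fun r c x =>
        bsV_eq (by simp [bsV_inr])
      rw [star_smul, h0, h0]
      simp only [map_smul, Submodule.coe_smul, star_smul, smul_mul_assoc, mul_smul_comm, hc]
  have h1 : ∀ (a : A) (x : principalLeftIdeal A e), bsV (a : Unitization ℂ A) x = bsLm a x :=
    fun a x => bsV_eq (by simp [bsLm_coe])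
  have := gen (a : Unitization ℂ A)
  rwa [← Unitization.inr_star, h1, h1] at this

theorem bs_M2 {e : A} {f : B} (hf₁ : star f = f) (hf₂ : f * f = f)
    {φ : principalLeftIdeal A e ≃ₗ[ℂ] principalLeftIdeal B f} (h : BSNorm φ)
    (a : A) {c c' : principalLeftIdeal A e} {d : B} (hd : d * f = d)
    (hc : (φ c' : B) = (φ c : B) * d) :
    (φ (bsLm a c') : B) = (φ (bsLm a c) : B) * d := by
  have hz : (φ (bsLm a c') : B) - (φ (bsLm a c) : B) * d ∈ principalLeftIdeal B f := by
    rw [bs_mem_iff hf₂, sub_mul, mul_assoc, hd, (bs_mem_iff hf₂).1 (φ (bsLm a c')).2]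
  have key : ∀ y : principalLeftIdeal A e,
      star (φ y : B) * ((φ (bsLm a c') : B) - (φ (bsLm a c) : B) * d) = 0 := by
    intro y
    have h1 := bs_M1 hf₁ hf₂ h (star a) y c'
    have h2 := bs_M1 hf₁ hf₂ h (star a) y c
    rw [star_star] at h1 h2
    rw [mul_sub, ← mul_assoc, ← h1, ← h2, hc, mul_assoc, sub_self]
  have := key (φ.symm ⟨_, hz⟩)
  rw [LinearEquiv.apply_symm_apply] at this
  exact sub_eq_zero.1 (bs_star_mul_self_zero this)

theorem bs_norm_map {e : A} {f : B}
    {φ : principalLeftIdeal A e ≃ₗ[ℂ] principalLeftIdeal B f} (h : BSNorm φ)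
    (x : principalLeftIdeal A e) : ‖(φ x : B)‖ = ‖(x : A)‖ := by
  have := h x 0
  simp only [map_zero, Submodule.coe_zero, mul_zero, add_zero, CStarRing.norm_star_mul_self] at this
  nlinarith [norm_nonneg (φ x : B), norm_nonneg (x : A)]

theorem bs_eq_of_star_mul {f : B} (hf₁ : star f = f) (hf₂ : f * f = f) {u v : B}
    (hu : u * f = u) (hv : v * f = v) (hun : ‖u‖ ≤ 1) (hvn : ‖v‖ ≤ 1) (huv : star u * v = f) :
    u = v := by
  let _ := CStarAlgebra.spectralOrder B
  have := CStarAlgebra.spectralOrderedRing B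
  have hle : ∀ u : B, u * f = u → ‖u‖ ≤ 1 → star u * u ≤ f := by
    intro u hu hun
    have := bs_mono (c := 1) hf₁ hf₂ (q := star u * u) (by simp) (bs_corner hf₁ hu hu) (by
      rw [CStarRing.norm_star_mul_self]
      nlinarith [norm_nonneg u])
    rwa [one_smul] at this
  have hvu : star v * u = f := by
    have := congrArg star huv
    rwa [star_mul, star_star, hf₁] at this
  have h1 : star (u - v) * (u - v) = (star u * u - f) + (star v * v - f) := by
    simp only [star_sub, sub_mul, mul_sub, huv, hvu]
    abel
  have h2 : star (u - v) * (u - v) = 0 := by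
    refine le_antisymm ?_ (star_mul_self_nonneg _)
    rw [h1]
    exact add_nonpos (sub_nonpos.2 (hle u hu hun)) (sub_nonpos.2 (hle v hv hvn))
  exact sub_eq_zero.1 (bs_star_mul_self_zero h2)

theorem bs_core {e : A} {f : B} (he₁ : star e = e) (he₂ : e * e = e)
    (hf₁ : star f = f) (hf₂ : f * f = f)
    {φ : principalLeftIdeal A e ≃ₗ[ℂ] principalLeftIdeal B f} (h : BSNorm φ)
    (u : B) (hu : u = (φ ⟨e, e, he₂.symm⟩ : B)) :
    star u * u = f ∧ ∀ x y : principalLeftIdeal A e,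
      (φ (bsLm (x : A) y) : B) = (φ x : B) * (star u * (φ y : B)) := by
  have hmA : ∀ x : principalLeftIdeal A e, (x : A) * e = x := fun x => (bs_mem_iff he₂).1 x.2
  have hmB : ∀ x : principalLeftIdeal B f, (x : B) * f = x := fun x => (bs_mem_iff hf₂).1 x.2
  set E : principalLeftIdeal A e := ⟨e, e, he₂.symm⟩ with hE
  set F : principalLeftIdeal B f := ⟨f, f, hf₂.symm⟩ with hF
  have hxE : ∀ x : principalLeftIdeal A e, bsLm (x : A) E = x := fun x => Subtype.ext (hmA x)
  have hxF : ∀ x : principalLeftIdeal B f, bsLm (x : B) F = x := fun x => Subtype.ext (hmB x)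
  have huf : u * f = u := by rw [hu]; exact hmB _
  set w := φ.symm F with hw
  have hφw : φ w = F := by simp [hw]
  have hww : star u * (φ (bsLm (star (w : A)) w) : B) = f := by
    have := bs_M1 hf₁ hf₂ h (w : A) E w
    rw [hxE, hφw, ← hu] at this
    rw [← this]
    change star f * f = f
    rw [hf₁, hf₂]
  have hwn : ‖(w : A)‖ ≤ 1 := by
    rw [← bs_norm_map h w, hφw]
    exact bs_proj_norm hf₁ hf₂
  have huv : u = (φ (bsLm (star (w : A)) w) : B) := by
    refine bs_eq_of_star_mul hf₁ hf₂ huf (hmB _) ?_ ?_ hww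
    · rw [hu, bs_norm_map h]
      exact bs_proj_norm he₁ he₂
    · rw [bs_norm_map h, bsLm_coe, CStarRing.norm_star_mul_self]
      nlinarith [norm_nonneg (w : A)]
  have huu : star u * u = f := by
    rw [← huv] at hww
    exact hww
  refine ⟨huu, ?_⟩
  have hfac : ∀ k : principalLeftIdeal A e, e * (k : A) = k →
      (φ k : B) = u * (star u * (φ k : B)) := by
    intro k hk
    have hc : (φ.symm (φ (bsLm (w : A) k)) : A) = (φ.symm F : A) * (k : A) := by
      rw [LinearEquiv.symm_apply_apply]; rfl
    have h1 := bs_M2 he₁ he₂ h.symm u (hmA k) hc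
    have h2 := bs_M2 he₁ he₂ h.symm f (hmA k) hc
    have huF : bsLm u F = φ E := Subtype.ext (by rw [bsLm_coe]; exact huf.trans hu)
    have hfF : bsLm f F = F := Subtype.ext hf₂
    rw [huF, LinearEquiv.symm_apply_apply] at h1
    have h1' : φ.symm (bsLm u (φ (bsLm (w : A) k))) = k := Subtype.ext (h1.trans hk)
    rw [LinearEquiv.symm_apply_eq] at h1'
    rw [hfF] at h2
    have h2' : φ.symm (bsLm f (φ (bsLm (w : A) k))) = bsLm (w : A) k := Subtype.ext h2
    rw [LinearEquiv.symm_apply_eq] at h2'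
    have h1c := congrArg (fun z : principalLeftIdeal B f => (z : B)) h1'
    have h2c := congrArg (fun z : principalLeftIdeal B f => (z : B)) h2'
    simp only [bsLm_coe] at h1c h2c
    rw [← h1c, ← mul_assoc (star u), huu, ]
    exact congrArg (u * ·) h2c.symm
  intro x y
  have hEy : e * (bsLm e y : A) = bsLm e y := by
    rw [bsLm_coe, ← mul_assoc, he₂]
  have h3 := bs_M2 hf₁ hf₂ h (x : A) (c := E) (c' := bsLm e y)
    (d := star u * (φ (bsLm e y) : B)) (by rw [mul_assoc, hmB]) (by
      rw [← hu]; exact hfac _ hEy)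
  have h4 : bsLm (x : A) (bsLm e y) = bsLm (x : A) y := Subtype.ext (by
    rw [bsLm_coe, bsLm_coe, bsLm_coe, ← mul_assoc, hmA])
  have h5 := bs_M1 hf₁ hf₂ h e E y
  have h6 : bsLm e E = E := Subtype.ext he₂
  rw [he₁, h6, ← hu] at h5
  rw [h4, hxE, ← h5] at h3
  exact h3

end BSMain

section BSNormPart

variable {A B : Type*} [NonUnitalCStarAlgebra A] [NonUnitalCStarAlgebra B]

theorem bs_cnorm {e : A} (he₁ : star e = e) (he₂ : e * e = e) {x y : A} (hx : x * e = x)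
    (hy : y * e = y) :
    cnorm (!![x, 0; y, 0] : Matrix (Fin 2) (Fin 2) A) = Real.sqrt ‖star x * x + star y * y‖ := by
  let _ := CStarAlgebra.spectralOrder A
  have := CStarAlgebra.spectralOrderedRing A
  unfold cnorm
  apply IsGreatest.csSup_eq
  constructor
  · refine ⟨![e, 0], ?_, ?_⟩
    · simpa [he₁, he₂] using bs_proj_norm he₁ he₂
    · simp [Matrix.mulVec, dotProduct, Fin.sum_univ_two, hx, hy, -star_mul]
  · rintro r ⟨v, hv, rfl⟩
    apply Real.sqrt_le_sqrt
    simp only [Matrix.mulVec, dotProduct, Fin.sum_univ_two, Matrix.of_apply, Matrix.cons_val_zero,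
      Matrix.cons_val_one, zero_mul, add_zero, Matrix.cons_val', Matrix.cons_val_fin_one] at hv ⊢
    have h1 : ‖v 0‖ ≤ 1 := by
      have : ‖star (v 0) * v 0‖ ≤ 1 :=
        (CStarAlgebra.norm_le_norm_of_nonneg_of_le (star_mul_self_nonneg _)
          (le_add_of_nonneg_right (star_mul_self_nonneg (v 1)))).trans hv
      rw [CStarRing.norm_star_mul_self] at this
      nlinarith [norm_nonneg (v 0)]
    have h2 : star (x * v 0) * (x * v 0) + star (y * v 0) * (y * v 0)
        = star (v 0) * (star x * x + star y * y) * v 0 := by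
      simp only [star_mul]
      noncomm_ring
    rw [h2]
    calc _ ≤ ‖star (v 0)‖ * ‖star x * x + star y * y‖ * ‖v 0‖ :=
          (norm_mul_le _ _).trans (by gcongr; exact norm_mul_le _ _)
      _ ≤ 1 * ‖star x * x + star y * y‖ * 1 := by rw [norm_star]; gcongr
      _ = _ := by ring

theorem bs_norm_of_ci {e : A} {f : B} (he₁ : star e = e) (he₂ : e * e = e)
    (hf₁ : star f = f) (hf₂ : f * f = f)
    (φ : principalLeftIdeal A e ≃ₗ[ℂ] principalLeftIdeal B f)
    (hci : IsCompletelyIsometric (fun x => (φ x : B))) : BSNorm φ := by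
  intro x y
  have h := hci 2 !![x, 0; y, 0]
  have h1 : (!![x, 0; y, 0] : Matrix (Fin 2) (Fin 2) (principalLeftIdeal A e)).map
      (fun x => (φ x : B)) = !![(φ x : B), 0; (φ y : B), 0] := by
    ext i j; fin_cases i <;> fin_cases j <;> simp
  have h2 : (!![x, 0; y, 0] : Matrix (Fin 2) (Fin 2) (principalLeftIdeal A e)).map
      ((↑) : principalLeftIdeal A e → A) = !![(x : A), 0; (y : A), 0] := by
    ext i j; fin_cases i <;> fin_cases j <;> simp
  rw [h1, h2, bs_cnorm he₁ he₂ ((bs_mem_iff he₂).1 x.2) ((bs_mem_iff he₂).1 y.2),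
    bs_cnorm hf₁ hf₂ ((bs_mem_iff hf₂).1 (φ x).2) ((bs_mem_iff hf₂).1 (φ y).2)] at h
  exact (Real.sqrt_inj (norm_nonneg _) (norm_nonneg _)).1 h

theorem bs_sum_le {p : B} (hp₁ : star p = p) (hp₂ : p * p = p) {t : B} (ht : star t * t = p)
    {n : ℕ} (v : Fin n → B) :
    ‖∑ i, star (t * v i) * (t * v i)‖ ≤ ‖∑ i, star (v i) * v i‖ := by
  let _ := CStarAlgebra.spectralOrder B
  have := CStarAlgebra.spectralOrderedRing B
  refine CStarAlgebra.norm_le_norm_of_nonneg_of_le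
    (Finset.sum_nonneg fun i _ => star_mul_self_nonneg _) (Finset.sum_le_sum fun i _ => ?_)
  rw [← sub_nonneg]
  have : star (v i) * v i - star (t * v i) * (t * v i)
      = star (v i - p * v i) * (v i - p * v i) := by
    have e1 : star (t * v i) * (t * v i) = star (v i) * (p * v i) := by
      rw [star_mul, mul_assoc, ← mul_assoc (star t), ht]
    have e2 : star (p * v i) * v i = star (v i) * (p * v i) := by
      rw [star_mul, hp₁, mul_assoc]
    have e3 : star (p * v i) * (p * v i) = star (v i) * (p * v i) := by
      rw [star_mul, hp₁, mul_assoc, ← mul_assoc p, hp₂]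
    rw [star_sub, sub_mul, mul_sub, mul_sub, e1, e2, e3]
    abel
  rw [this]
  exact star_mul_self_nonneg _

theorem bs_cnorm_mul {f u : B} (hf₁ : star f = f) (hf₂ : f * f = f) (huu : star u * u = f)
    (huf : u * f = u) {n : ℕ} (X : Matrix (Fin n) (Fin n) B) (hX : ∀ i j, X i j * f = X i j) :
    cnorm (X.map (fun b => b * star u)) = cnorm X := by
  have hp₁ : star (u * star u) = u * star u := by simp
  have hp₂ : (u * star u) * (u * star u) = u * star u := by
    rw [mul_assoc, ← mul_assoc (star u), huu, ← mul_assoc, huf]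
  unfold cnorm
  congr 1
  ext r
  constructor
  · rintro ⟨v, hv, rfl⟩
    refine ⟨fun i => star u * v i,
      (bs_sum_le (t := star u) hp₁ hp₂ (by rw [star_star]) v).trans hv, ?_⟩
    have : (X.map (fun b => b * star u)).mulVec v = X.mulVec (fun i => star u * v i) := by
      ext i
      simp [Matrix.mulVec, dotProduct, mul_assoc]
    rw [this]
  · rintro ⟨v, hv, rfl⟩
    refine ⟨fun i => u * v i, (bs_sum_le (t := u) hf₁ hf₂ huu v).trans hv, ?_⟩
    have : (X.map (fun b => b * star u)).mulVec (fun i => u * v i) = X.mulVec v := by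
      ext i
      simp only [Matrix.mulVec, dotProduct, Matrix.map_apply]
      refine Finset.sum_congr rfl fun j _ => ?_
      rw [mul_assoc, ← mul_assoc (star u), huu, ← mul_assoc, hX]
    rw [this]

end BSNormPart

theorem banach_stone_principal_ideals
    {A B : Type*} [NonUnitalCStarAlgebra A] [NonUnitalCStarAlgebra B]
    (e : A) (f : B) (he₁ : star e = e) (he₂ : e * e = e)
    (hf₁ : star f = f) (hf₂ : f * f = f)
    (φ : principalLeftIdeal A e →ₗ[ℂ] principalLeftIdeal B f)
    (hbij : Function.Bijective φ)
    (hci : IsCompletelyIsometric (fun x => (φ x : B)))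
    (u : B) (hu : u = (φ ⟨e, e, he₂.symm⟩ : B)) :
    -- (1) `u` is a partial isometry with initial projection `f`
    star u * u = f ∧
    star (u * star u) = u * star u ∧ (u * star u) * (u * star u) = u * star u ∧
    -- (2) `π := φ(·) * u*` is multiplicative ...
    (∀ x y z : principalLeftIdeal A e, (z : A) = (x : A) * (y : A) →
      (φ z : B) * star u = ((φ x : B) * star u) * ((φ y : B) * star u)) ∧
    -- ... completely isometric ...
    IsCompletelyIsometric (fun x : principalLeftIdeal A e => (φ x : B) * star u) ∧
    -- ... with range `{b * u* : b ∈ B} = {b * (u * u*) : b ∈ B}` ...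
    Set.range (fun x : principalLeftIdeal A e => (φ x : B) * star u)
      = {y : B | ∃ b : B, y = b * star u} ∧
    {y : B | ∃ b : B, y = b * star u} = {y : B | ∃ b : B, y = b * (u * star u)} ∧
    -- ... a norm-closed left ideal of `B` with right identity `u * u*`
    IsClosed {y : B | ∃ b : B, y = b * star u} ∧
    (∀ b : B, ∀ y ∈ {y : B | ∃ b : B, y = b * star u},
      b * y ∈ {y : B | ∃ b : B, y = b * star u}) ∧
    (∀ y ∈ {y : B | ∃ b : B, y = b * star u}, y * (u * star u) = y) ∧
    -- (3) `φ = π(·) * u`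
    (∀ x : principalLeftIdeal A e, (φ x : B) = ((φ x : B) * star u) * u) := by
  let Φ : principalLeftIdeal A e ≃ₗ[ℂ] principalLeftIdeal B f := LinearEquiv.ofBijective φ hbij
  have hN : BSNorm Φ := bs_norm_of_ci he₁ he₂ hf₁ hf₂ Φ hci
  obtain ⟨huu, hmul⟩ := bs_core he₁ he₂ hf₁ hf₂ hN u hu
  replace hmul : ∀ x y : principalLeftIdeal A e,
      (φ (bsLm (x : A) y) : B) = (φ x : B) * (star u * (φ y : B)) := hmul
  have hmB : ∀ x : principalLeftIdeal B f, (x : B) * f = x := fun x => (bs_mem_iff hf₂).1 x.2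
  have huf : u * f = u := by rw [hu]; exact hmB _
  have hfu : f * star u = star u := by
    have := congrArg star huf
    rwa [star_mul, hf₁] at this
  have hsu : star u * (u * star u) = star u := by rw [← mul_assoc, huu, hfu]
  have hset : {y : B | ∃ b : B, y = b * star u} = {y : B | y * (u * star u) = y} := by
    ext y
    constructor
    · rintro ⟨b, rfl⟩
      change b * star u * (u * star u) = b * star u
      rw [mul_assoc, hsu]
    · intro hy
      exact ⟨y * u, by rw [mul_assoc]; exact hy.symm⟩
  refine ⟨huu, by simp, by rw [mul_assoc, hsu], ?_, ?_, ?_, ?_, ?_, ?_, ?_, ?_⟩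
  · intro x y z hz
    have : z = bsLm (x : A) y := Subtype.ext hz
    rw [this, hmul]
    simp only [mul_assoc]
  · intro n x
    rw [← hci n x]
    exact bs_cnorm_mul hf₁ hf₂ huu huf (x.map fun x => (φ x : B)) fun i j => hmB _
  · ext y
    constructor
    · rintro ⟨x, rfl⟩
      exact ⟨_, rfl⟩
    · rintro ⟨b, rfl⟩
      obtain ⟨x, hx⟩ := hbij.2 ⟨b * f, b, rfl⟩
      refine ⟨x, ?_⟩
      simp only [hx]
      rw [mul_assoc, hfu]
  · ext y
    constructor
    · rintro ⟨b, rfl⟩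
      exact ⟨b * star u, by rw [mul_assoc, hsu]⟩
    · rintro ⟨b, rfl⟩
      exact ⟨b * u, by rw [mul_assoc]⟩
  · rw [hset]
    exact isClosed_eq (continuous_id.mul continuous_const) continuous_id
  · rintro b y ⟨c, rfl⟩
    exact ⟨b * c, by rw [mul_assoc]⟩
  · intro y hy
    rw [hset] at hy
    exact hy
  · intro x
    rw [mul_assoc, huu, hmB]
end

section
/- Let I and J be closed left ideals of C*-algebras A and B respectively, and let φ : I → J be a bijective linear map which is completely isometric. Then φ is multiplicative (φ(x * y) = φ(x) * φ(y) for all x, y ∈ I) if and only if there exists a net (e_i)_{i ∈ ι} in I, indexed by a nonempty directed set ι, with ‖e_i‖ ≤ 1 for all i, such that ‖x * e_i − x‖ → 0 for every x ∈ I and ‖y * φ(e_i) − y‖ → 0 for every y ∈ J (i.e., (e_i) is a right contractive approximate identity for I whose image under φ is a right contractive approximate identity for J). -/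
open Filter Topology

/-- A net in `α`: a function on a nonempty directed preordered index type. -/
structure DirectedNet.{w, u} (α : Type u) : Type (max u (w + 1)) where
  ι : Type w
  [pre : Preorder ι]
  [ne : Nonempty ι]
  dir : IsDirected ι (· ≤ ·)
  elem : ι → α

attribute [instance] DirectedNet.pre DirectedNet.ne


open Filter Topology

section helpers

lemma cnorm_col {A : Type*} [NonUnitalCStarAlgebra A] {n : ℕ} (c : Fin (n + 1) → A)
    (M : Matrix (Fin (n + 1)) (Fin (n + 1)) A) (hM : ∀ i j, M i j = if j = 0 then c i else 0) :
    cnorm M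
      = Real.sqrt ‖∑ i, star (c i) * c i‖ := by
  let _ := CStarAlgebra.spectralOrder A
  have := CStarAlgebra.spectralOrderedRing A
  set h : A := ∑ i, star (c i) * c i with hh
  have hsa : star h = h := by simp [hh]
  have key : ∀ v : Fin (n + 1) → A,
      ∑ i, star (M.mulVec v i) * M.mulVec v i = star (v 0) * h * v 0 := by
    intro v
    have : ∀ i, M.mulVec v i = c i * v 0 := by
      intro i
      simp [Matrix.mulVec, dotProduct, hM]
    simp only [this, hh, Finset.mul_sum, Finset.sum_mul, star_mul, mul_assoc]
  have hle : ∀ v : Fin (n + 1) → A, ‖∑ i, star (v i) * v i‖ ≤ 1 → ‖v 0‖ ≤ 1 := by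
    intro v hv
    have h1 : ‖star (v 0) * v 0‖ ≤ ‖∑ i, star (v i) * v i‖ := by
      refine CStarAlgebra.norm_le_norm_of_nonneg_of_le (star_mul_self_nonneg _) ?_
      exact Finset.single_le_sum (f := fun i => star (v i) * v i)
        (fun i _ => star_mul_self_nonneg _) (Finset.mem_univ 0)
    rw [CStarRing.norm_star_mul_self] at h1
    nlinarith [norm_nonneg (v 0)]
  unfold cnorm
  simp only [key]
  apply le_antisymm
  · apply csSup_le
    · exact ⟨_, fun _ => 0, by simp, rfl⟩
    · rintro r ⟨v, hv, rfl⟩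
      apply Real.sqrt_le_sqrt
      have h0 := hle v hv
      calc ‖star (v 0) * h * v 0‖ ≤ ‖star (v 0)‖ * ‖h‖ * ‖v 0‖ :=
            (norm_mul_le _ _).trans (by gcongr; exact norm_mul_le _ _)
        _ ≤ 1 * ‖h‖ * 1 := by rw [norm_star]; gcongr
        _ = ‖h‖ := by ring
  · apply le_csSup
    · refine ⟨Real.sqrt ‖h‖, ?_⟩
      rintro r ⟨v, hv, rfl⟩
      apply Real.sqrt_le_sqrt
      have h0 := hle v hv
      calc ‖star (v 0) * h * v 0‖ ≤ ‖star (v 0)‖ * ‖h‖ * ‖v 0‖ :=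
            (norm_mul_le _ _).trans (by gcongr; exact norm_mul_le _ _)
        _ ≤ 1 * ‖h‖ * 1 := by rw [norm_star]; gcongr
        _ = ‖h‖ := by ring
    · by_cases hz : h = 0
      · exact ⟨fun _ => 0, by simp, by simp [hz]⟩
      have hn : ‖h‖ ≠ 0 := by simpa using hz
      have hhh : ‖h * h‖ = ‖h‖ * ‖h‖ := by
        have := CStarRing.norm_star_mul_self (x := h)
        rwa [hsa] at this
      have hsq : ‖h * h * (h * h)‖ = ‖h * h‖ * ‖h * h‖ := by
        have := CStarRing.norm_star_mul_self (x := h * h)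
        rwa [star_mul, hsa] at this
      have h3 : ‖h * h * h‖ = ‖h‖ ^ 3 := by
        apply le_antisymm
        · calc _ ≤ ‖h * h‖ * ‖h‖ := norm_mul_le _ _
            _ = _ := by rw [hhh]; ring
        · have : ‖h * h * (h * h)‖ ≤ ‖h * h * h‖ * ‖h‖ := by
            rw [← mul_assoc]; exact norm_mul_le _ _
          rw [hsq, hhh] at this
          have hp : 0 < ‖h‖ := by positivity
          have : ‖h‖ ^ 3 * ‖h‖ ≤ ‖h * h * h‖ * ‖h‖ := by nlinarith
          exact le_of_mul_le_mul_right this hp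
      refine ⟨fun i => if i = 0 then ((‖h‖⁻¹ : ℝ) : ℂ) • h else 0, ?_, ?_⟩
      · rw [Finset.sum_eq_single 0]
        · simp [norm_smul, hn, hsa, hhh, smul_mul_assoc,
            mul_smul_comm]
        · intro b _ hb; simp [hb]
        · simp
      · congr 1
        simp only [if_true, star_smul, smul_mul_assoc, mul_smul_comm, norm_smul, hsa, h3]
        simp
        field_simp

lemma star_conv {A : Type*} [NonUnitalCStarAlgebra A] {ι : Type*} {l : Filter ι} (e : ι → A)
    (he : ∀ i, ‖e i‖ ≤ 1) (x : A) (hx : Tendsto (fun i => x * e i) l (𝓝 x)) :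
    Tendsto (fun i => x * star (e i)) l (𝓝 x) := by
  let _ := CStarAlgebra.spectralOrder A
  have := CStarAlgebra.spectralOrderedRing A
  have hx' : Tendsto (fun i => x * star x - x * star (e i) * star x + (x * star x - x * e i * star x))
      l (𝓝 0) := by
    have h1 : Tendsto (fun i => x * e i * star x) l (𝓝 (x * star x)) := hx.mul_const _
    have h2 : Tendsto (fun i => x * star (e i) * star x) l (𝓝 (x * star x)) := by
      have := h1.star
      simpa [mul_assoc] using this
    have := (h2.const_sub (x * star x)).add (h1.const_sub (x * star x))
    simpa using this
  rw [tendsto_iff_norm_sub_tendsto_zero]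
  have hsq : Tendsto (fun i => ‖x * star (e i) - x‖ ^ 2) l (𝓝 0) := by
    refine squeeze_zero (fun i => by positivity) (fun i => ?_) (by simpa using hx'.norm)
    rw [sq, ← CStarRing.norm_self_mul_star]
    refine CStarAlgebra.norm_le_norm_of_nonneg_of_le (mul_star_self_nonneg _) ?_
    have h1 : x * (star (e i) * e i) * star x ≤ x * star x := by
      refine (CStarAlgebra.star_right_conjugate_le_norm_smul (a := x)
        (b := star (e i) * e i) (.star_mul_self _)).trans ?_
      have : ‖star (e i) * e i‖ ≤ 1 := by
        rw [CStarRing.norm_star_mul_self]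
        nlinarith [he i, norm_nonneg (e i)]
      calc _ ≤ (1 : ℝ) • (x * star x) :=
            smul_le_smul_of_nonneg_right this (mul_star_self_nonneg _)
        _ = _ := one_smul _ _
    have h2 : (x * star (e i) - x) * star (x * star (e i) - x)
      = x * (star (e i) * e i) * star x - x * star (e i) * star x - x * e i * star x
        + x * star x := by
      simp only [star_sub, star_mul, star_star, mul_sub, sub_mul, mul_assoc]
      abel
    rw [h2]
    calc _ ≤ x * star x - x * star (e i) * star x - x * e i * star x
        + x * star x := by gcongr
      _ = _ := by abel
  have := hsq.sqrt
  simpa using this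

lemma order_of_norms {U : Type*} [CStarAlgebra U] [PartialOrder U] [StarOrderedRing U]
    {ι : Type*} {l : Filter ι} [l.NeBot] (f : ι → U) (hf : ∀ i, ‖f i‖ ≤ 1)
    (hff : ∀ j, Tendsto (fun i => f j * f i) l (𝓝 (f j)))
    (p p' : U) (hp : 0 ≤ p) (hp' : 0 ≤ p')
    (hpf : Tendsto (fun i => p * f i) l (𝓝 p))
    (hpf' : Tendsto (fun i => p' * f i) l (𝓝 p'))
    (H : ∀ r i, ‖p' + star (r * f i) * (r * f i)‖ ≤ ‖p + star (r * f i) * (r * f i)‖) :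
    p' ≤ p := by
  have hps : star p = p := IsSelfAdjoint.of_nonneg hp
  have hps' : star p' = p' := IsSelfAdjoint.of_nonneg hp'
  set t : ℝ := ‖p‖ with ht
  have h0 : 0 ≤ algebraMap ℝ U t - p :=
    sub_nonneg.2 (IsSelfAdjoint.le_algebraMap_norm_self (IsSelfAdjoint.of_nonneg hp))
  obtain ⟨r, hr⟩ := CStarAlgebra.nonneg_iff_eq_star_mul_self.1 h0
  have hc : ∀ i, star (r * f i) * (r * f i) = t • (star (f i) * f i) - star (f i) * p * f i := by
    intro i
    have : star (r * f i) * (r * f i) = star (f i) * (star r * r) * f i := by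
      simp [mul_assoc]
    rw [this, ← hr, mul_sub, sub_mul, Algebra.algebraMap_eq_smul_one]
    simp
  have hfpf : Tendsto (fun i => star (f i) * p * f i) l (𝓝 p) := by
    have h1 : Tendsto (fun i => star (f i) * p) l (𝓝 p) := by
      have := hpf.star
      simpa [hps] using this
    have h2 : Tendsto (fun i => star (f i) * p * f i - p * f i) l (𝓝 0) := by
      rw [tendsto_zero_iff_norm_tendsto_zero]
      refine squeeze_zero (fun _ => norm_nonneg _) (fun i => ?_)
        (tendsto_iff_norm_sub_tendsto_zero.1 h1)
      rw [← sub_mul]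
      exact (norm_mul_le _ _).trans (mul_le_of_le_one_right (norm_nonneg _) (hf i))
    simpa using h2.add hpf
  have hstar : ∀ x, Tendsto (fun i => x * f i) l (𝓝 x) →
      Tendsto (fun i => f i * star x) l (𝓝 (star x)) := by
    intro x hx
    simpa using (star_conv f hf x hx).star
  have hj : ∀ j, f j * p' * star (f j) ≤ f j * p * star (f j) := by
    intro j
    have hle : ∀ i, f j * (p' + star (r * f i) * (r * f i)) * star (f j) ≤
        (t + ‖p - star (f i) * p * f i‖) • (f j * star (f j)) := by
      intro i
      have hn : 0 ≤ p' + star (r * f i) * (r * f i) := add_nonneg hp' (star_mul_self_nonneg _)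
      refine (CStarAlgebra.star_right_conjugate_le_norm_smul (a := f j)
        (IsSelfAdjoint.of_nonneg hn)).trans ?_
      refine smul_le_smul_of_nonneg_right ?_ (mul_star_self_nonneg _)
      refine (H r i).trans ?_
      rw [hc]
      have : p + (t • (star (f i) * f i) - star (f i) * p * f i) =
        t • (star (f i) * f i) + (p - star (f i) * p * f i) := by abel
      rw [this]
      refine (norm_add_le _ _).trans ?_
      gcongr
      rw [norm_smul, CStarRing.norm_star_mul_self, ht, norm_norm]
      have : ‖f i‖ * ‖f i‖ ≤ 1 := by nlinarith [hf i, norm_nonneg (f i)]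
      exact mul_le_of_le_one_right (norm_nonneg _) this
    have hR : Tendsto (fun i => (t + ‖p - star (f i) * p * f i‖) • (f j * star (f j))) l
        (𝓝 (t • (f j * star (f j)))) := by
      have := ((hfpf.const_sub p).norm.const_add t).smul_const (f j * star (f j))
      simpa using this
    have hL : Tendsto (fun i => f j * (p' + star (r * f i) * (r * f i)) * star (f j)) l
        (𝓝 (f j * p' * star (f j) + (t • (f j * star (f j)) - f j * p * star (f j)))) := by
      have h1 := star_conv f hf (f j) (hff j)
      have h2 := hstar (f j) (hff j)
      have h3 := ((h1.mul h2).const_smul t).sub ((h1.mul_const p).mul h2)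
      have h4 := h3.const_add (f j * p' * star (f j))
      refine h4.congr (fun i => ?_)
      rw [hc]
      simp only [mul_add, add_mul, mul_sub, sub_mul, mul_assoc, smul_mul_assoc, mul_smul_comm]
    have := le_of_tendsto_of_tendsto' hL hR hle
    have h5 : f j * p' * star (f j) - f j * p * star (f j) ≤ 0 := by
      have := sub_nonpos.2 this
      refine le_trans (le_of_eq ?_) this
      abel
    exact sub_nonpos.1 h5
  have hlim : ∀ q : U, star q = q → Tendsto (fun i => q * f i) l (𝓝 q) →
      Tendsto (fun j => f j * q * star (f j)) l (𝓝 q) := by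
    intro q hq hqf
    have h1 := hstar q hqf
    rw [hq] at h1
    have h1' := star_conv f hf q hqf
    have h2 : Tendsto (fun i => f i * q * star (f i) - q * star (f i)) l (𝓝 0) := by
      rw [tendsto_zero_iff_norm_tendsto_zero]
      refine squeeze_zero (fun _ => norm_nonneg _) (fun i => ?_)
        (tendsto_iff_norm_sub_tendsto_zero.1 h1)
      rw [← sub_mul]
      exact (norm_mul_le _ _).trans (mul_le_of_le_one_right (norm_nonneg _)
        (by rw [norm_star]; exact hf i))
    simpa using h2.add h1'
  exact le_of_tendsto_of_tendsto' (hlim p' hps' hpf') (hlim p hps hpf) hj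

lemma order_of_norms_nonunital {B : Type*} [NonUnitalCStarAlgebra B] [PartialOrder B]
    [StarOrderedRing B] {ι : Type*} {l : Filter ι} [l.NeBot] (f : ι → B) (hf : ∀ i, ‖f i‖ ≤ 1)
    (J : Submodule ℂ B) (hJ : ∀ b : B, ∀ y ∈ J, b * y ∈ J) (hfJ : ∀ i, f i ∈ J)
    (hJf : ∀ y ∈ J, Tendsto (fun i => y * f i) l (𝓝 y))
    (p p' : B) (hp : 0 ≤ p) (hp' : 0 ≤ p') (hpJ : p ∈ J) (hpJ' : p' ∈ J)
    (H : ∀ y ∈ J, ‖p' + star y * y‖ ≤ ‖p + star y * y‖) :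
    p' ≤ p := by
  have hcont : Continuous (fun b : B => (b : Unitization ℂ B)) :=
    (Unitization.isometry_inr (𝕜 := ℂ)).continuous
  have hT : ∀ y ∈ J, Tendsto (fun i => (y : Unitization ℂ B) * (f i : Unitization ℂ B)) l
      (𝓝 (y : Unitization ℂ B)) := by
    intro y hy
    have := (hcont.tendsto y).comp (hJf y hy)
    simpa [Function.comp_def] using this
  rw [← Unitization.inr_le_iff p' p (.of_nonneg hp') (.of_nonneg hp)]
  refine order_of_norms (l := l) (fun i => (f i : Unitization ℂ B)) (fun i => ?_)
    (fun j => hT _ (hfJ j)) _ _ (Unitization.inr_nonneg_iff.2 hp)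
    (Unitization.inr_nonneg_iff.2 hp') (hT _ hpJ) (hT _ hpJ') ?_
  · rw [Unitization.norm_inr]; exact hf i
  · intro r i
    have : r * (f i : Unitization ℂ B) = ((r.fst • f i + r.snd * f i : B) : Unitization ℂ B) := by
      ext <;> simp
    rw [this, ← Unitization.inr_star, ← Unitization.inr_mul, ← Unitization.inr_add,
      ← Unitization.inr_add, Unitization.norm_inr, Unitization.norm_inr]
    exact H _ (J.add_mem (J.smul_mem _ (hfJ i)) (hJ _ _ (hfJ i)))

/-- `x, y` columns with the same Gram element are mapped to such columns. -/
lemma gram {A B : Type*} [NonUnitalCStarAlgebra A] [NonUnitalCStarAlgebra B]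
    (I : Submodule ℂ A) (J : Submodule ℂ B) (hJ : ∀ b : B, ∀ y ∈ J, b * y ∈ J)
    (φ : I ≃ₗ[ℂ] J)
    (hcol : ∀ x y z : I, ‖star (φ x : B) * φ x + star (φ y : B) * φ y + star (φ z : B) * φ z‖ =
      ‖star (x : A) * x + star (y : A) * y + star (z : A) * z‖)
    {ι : Type*} {l : Filter ι} [l.NeBot] (f : ι → J) (hf : ∀ i, ‖(f i : B)‖ ≤ 1)
    (hJf : ∀ y ∈ J, Tendsto (fun i => y * (f i : B)) l (𝓝 y))
    (x₁ x₂ y₁ y₂ : I) (h : star (x₁ : A) * x₁ + star (x₂ : A) * x₂ =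
      star (y₁ : A) * y₁ + star (y₂ : A) * y₂) :
    star (φ x₁ : B) * φ x₁ + star (φ x₂ : B) * φ x₂ =
      star (φ y₁ : B) * φ y₁ + star (φ y₂ : B) * φ y₂ := by
  let _ := CStarAlgebra.spectralOrder B
  have := CStarAlgebra.spectralOrderedRing B
  have main : ∀ x₁ x₂ y₁ y₂ : I, star (x₁ : A) * x₁ + star (x₂ : A) * x₂ =
      star (y₁ : A) * y₁ + star (y₂ : A) * y₂ → 
    star (φ x₁ : B) * φ x₁ + star (φ x₂ : B) * φ x₂ ≤
      star (φ y₁ : B) * φ y₁ + star (φ y₂ : B) * φ y₂ := by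
    intro x₁ x₂ y₁ y₂ h
    refine order_of_norms_nonunital (l := l) (fun i => (f i : B)) hf J hJ (fun i => (f i).2) hJf
      _ _ (add_nonneg (star_mul_self_nonneg _) (star_mul_self_nonneg _))
      (add_nonneg (star_mul_self_nonneg _) (star_mul_self_nonneg _))
      (J.add_mem (hJ _ _ (φ _).2) (hJ _ _ (φ _).2))
      (J.add_mem (hJ _ _ (φ _).2) (hJ _ _ (φ _).2)) ?_
    intro y hy
    obtain ⟨z, hz⟩ := φ.surjective ⟨y, hy⟩
    have hz' : y = (φ z : B) := by rw [hz]
    rw [hz', hcol, hcol, h]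
  exact le_antisymm (main _ _ _ _ h) (main _ _ _ _ h.symm)

lemma gram_polar {A B : Type*} [NonUnitalCStarAlgebra A] [NonUnitalCStarAlgebra B]
    (I : Submodule ℂ A) (J : Submodule ℂ B) (hJ : ∀ b : B, ∀ y ∈ J, b * y ∈ J)
    (φ : I ≃ₗ[ℂ] J)
    (hcol : ∀ x y z : I, ‖star (φ x : B) * φ x + star (φ y : B) * φ y + star (φ z : B) * φ z‖ =
      ‖star (x : A) * x + star (y : A) * y + star (z : A) * z‖)
    {ι : Type*} {l : Filter ι} [l.NeBot] (f : ι → J) (hf : ∀ i, ‖(f i : B)‖ ≤ 1)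
    (hJf : ∀ y ∈ J, Tendsto (fun i => y * (f i : B)) l (𝓝 y))
    (x₁ x₂ y₁ y₂ : I) (h : star (x₁ : A) * y₁ = star (x₂ : A) * y₂) :
    star (φ x₁ : B) * φ y₁ = star (φ x₂ : B) * φ y₂ := by
  have main : ∀ x₁ x₂ y₁ y₂ : I, star (x₁ : A) * y₁ = star (x₂ : A) * y₂ →
      star (φ x₁ : B) * φ y₁ + star (φ y₁ : B) * φ x₁ =
      star (φ x₂ : B) * φ y₂ + star (φ y₂ : B) * φ x₂ := by
    intro x₁ x₂ y₁ y₂ h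
    have h' : star (y₁ : A) * x₁ = star (y₂ : A) * x₂ := by
      simpa using congrArg star h
    have := gram I J hJ φ hcol f hf hJf (x₁ + y₁) (x₂ - y₂) (x₁ - y₁) (x₂ + y₂) (by
      push_cast
      simp only [star_add, star_sub, add_mul, mul_add, sub_mul, mul_sub, h, h']
      abel)
    simp only [map_add, map_sub] at this
    push_cast at this
    simp only [star_add, star_sub, add_mul, mul_add, sub_mul, mul_sub] at this
    have h2 : (2 : ℂ) • (star (φ x₁ : B) * φ y₁ + star (φ y₁ : B) * φ x₁) =
      (2 : ℂ) • (star (φ x₂ : B) * φ y₂ + star (φ y₂ : B) * φ x₂) := by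
      rw [two_smul, two_smul, ← sub_eq_zero]
      rw [← sub_eq_zero] at this
      rw [← this]
      abel
    exact smul_right_injective B (two_ne_zero (α := ℂ)) h2
  have h1 := main _ _ _ _ h
  have h2 := main x₁ x₂ (Complex.I • y₁) (Complex.I • y₂) (by
    push_cast
    rw [mul_smul_comm, mul_smul_comm, h])
  simp only [map_smul] at h2
  push_cast at h2
  simp only [mul_smul_comm, smul_mul_assoc, star_smul, Complex.star_def, Complex.conj_I] at h2
  have h3 : star (φ x₁ : B) * φ y₁ - star (φ y₁ : B) * φ x₁ =
      star (φ x₂ : B) * φ y₂ - star (φ y₂ : B) * φ x₂ := by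
    apply smul_right_injective B Complex.I_ne_zero
    simp only [smul_sub]
    simpa [sub_eq_add_neg] using h2
  have h4 : (2 : ℂ) • (star (φ x₁ : B) * φ y₁) = (2 : ℂ) • (star (φ x₂ : B) * φ y₂) := by
    have := congrArg₂ (· + ·) h1 h3
    simp only [add_add_sub_cancel] at this
    rw [two_smul, two_smul, this]
  exact smul_right_injective B (two_ne_zero (α := ℂ)) h4

lemma mult_of_net {A B : Type*} [NonUnitalCStarAlgebra A] [NonUnitalCStarAlgebra B]
    (I : Submodule ℂ A) (hI : ∀ a : A, ∀ x ∈ I, a * x ∈ I)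
    (J : Submodule ℂ B) (hJ : ∀ b : B, ∀ y ∈ J, b * y ∈ J)
    (φ : I ≃ₗ[ℂ] J)
    (hcol : ∀ x y z : I, ‖star (φ x : B) * φ x + star (φ y : B) * φ y + star (φ z : B) * φ z‖ =
      ‖star (x : A) * x + star (y : A) * y + star (z : A) * z‖)
    (hiso : ∀ x : I, ‖φ x‖ = ‖x‖)
    {ι : Type*} {l : Filter ι} [l.NeBot] (e : ι → I) (he : ∀ i, ‖(e i : A)‖ ≤ 1)
    (hIe : ∀ x ∈ I, Tendsto (fun i => x * (e i : A)) l (𝓝 x))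
    (hJe : ∀ y ∈ J, Tendsto (fun i => y * (φ (e i) : B)) l (𝓝 y))
    (x y z : I) (hz : (z : A) = x * y) : (φ z : B) = φ x * φ y := by
  have he' : ∀ i, ‖(φ (e i) : B)‖ ≤ 1 := fun i => by
    have := hiso (e i)
    rw [Submodule.coe_norm, Submodule.coe_norm] at this
    rw [this]; exact he i
  have hφ : Continuous φ := (AddMonoidHomClass.isometry_of_norm φ hiso).continuous
  have hψ : Continuous φ.symm := (AddMonoidHomClass.isometry_of_norm φ.symm (fun y => by
    rw [← hiso, φ.apply_symm_apply])).continuous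
  have P := gram_polar I J hJ φ hcol (l := l) (fun i => φ (e i)) he' hJe
  have Q := gram_polar J I hI φ.symm (fun x y z => by
    have := hcol (φ.symm x) (φ.symm y) (φ.symm z)
    simpa using this.symm) (l := l) e he hIe
  -- left multiplications
  let L : A → I → I := fun a x => ⟨a * x, hI a x x.2⟩
  let K : B → J → J := fun b y => ⟨b * y, hJ b y y.2⟩
  -- module property
  have hmod : ∀ (a : A) (x d : J),
      (φ (L a (φ.symm (K x d))) : B) = φ (L a (φ.symm x)) * d := by
    intro a x d
    have h1 : ∀ y : J, star (y : B) * φ (L a (φ.symm (K x d))) =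
        star (y : B) * (φ (L a (φ.symm x)) * d) := by
      intro y
      obtain ⟨s, rfl⟩ := φ.surjective y
      have e1 := P s (L (star a) s) (L a (φ.symm (K x d))) (φ.symm (K x d))
        (by simp [L, mul_assoc])
      have e2 := P s (L (star a) s) (L a (φ.symm x)) (φ.symm x) (by simp [L, mul_assoc])
      rw [e1, ← mul_assoc, e2]
      simp [K, mul_assoc]
    have h2 := h1 (φ (L a (φ.symm (K x d))) - K (φ (L a (φ.symm x)) : B) d)
    rw [← sub_eq_zero, ← mul_sub] at h2
    have h3 : ((φ (L a (φ.symm (K x d))) - K (φ (L a (φ.symm x)) : B) d : J) : B) =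
      φ (L a (φ.symm (K x d))) - φ (L a (φ.symm x)) * d := by simp [K]
    rw [h3, CStarRing.star_mul_self_eq_zero_iff, sub_eq_zero] at h2
    exact h2
  have htriple : ∀ h a t : I, (φ (L (h * star (a : A)) t) : B) = φ h * star (φ a : B) * φ t := by
    intro h a t
    set d : J := K (star (φ a : B)) (φ t) with hd
    have hdv : (d : B) = star (φ a : B) * φ t := rfl
    -- h a* t = h ψ(d)
    have e1 : (h : A) * star (a : A) * t = h * (φ.symm d : A) := by
      have q : ∀ i, star (φ.symm (K (φ a : B) (φ (e i))) : A) * t =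
          star (e i : A) * φ.symm d := by
        intro i
        have := Q (K (φ a : B) (φ (e i))) (φ (e i)) (φ t) d (by simp [K, hd, mul_assoc])
        simpa using this
      have l1 : Tendsto (fun i => φ.symm (K (φ a : B) (φ (e i)))) l (𝓝 a) := by
        have : Tendsto (fun i => K (φ a : B) (φ (e i))) l (𝓝 (φ a)) :=
          tendsto_subtype_rng.2 (hJe _ (φ a).2)
        have := (hψ.tendsto _).comp this
        simpa [Function.comp_def] using this
      have l2 := (((tendsto_subtype_rng.1 l1).star).mul_const (t : A)).const_mul (h : A)
      have l3 := (star_conv (fun i => (e i : A)) he h (hIe h h.2)).mul_const (φ.symm d : A)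
      refine (mul_assoc _ _ _).trans (tendsto_nhds_unique l2 (l3.congr fun i => ?_))
      rw [q, mul_assoc]
    have e2 : L (h * star (a : A)) t = L h (φ.symm d) := Subtype.ext e1
    rw [e2]
    have l1 : Tendsto (fun i => K (φ (e i) : B) d) l (𝓝 d) := by
      refine tendsto_subtype_rng.2 ?_
      have hdJ : star (d : B) ∈ J := by
        rw [hdv, star_mul, star_star]; exact hJ _ _ (φ a).2
      simpa using (star_conv (fun i => (φ (e i) : B)) he' _ (hJe _ hdJ)).star
    have l2 : Tendsto (fun i => (φ (L h (φ.symm (K (φ (e i) : B) d))) : B)) l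
        (𝓝 (φ (L h (φ.symm d)) : B)) := by
      have c1 : Continuous (L h) := by
        refine Continuous.subtype_mk ?_ _
        fun_prop
      have := (((continuous_subtype_val.comp hφ).comp (c1.comp hψ)).tendsto d).comp l1
      simpa [Function.comp_def] using this
    have l3 : Tendsto (fun i => (φ (L h (φ.symm (φ (e i)))) : B) * d) l (𝓝 ((φ h : B) * d)) := by
      have : Tendsto (fun i => L h (e i)) l (𝓝 h) := tendsto_subtype_rng.2 (hIe _ h.2)
      have := ((continuous_subtype_val.comp hφ).tendsto _).comp this
      simpa [Function.comp_def] using this.mul_const (d : B)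
    rw [mul_assoc, ← hdv]
    exact tendsto_nhds_unique l2 (l3.congr fun i => (hmod _ _ _).symm)
  have hzL : z = L x y := Subtype.ext hz
  rw [hzL]
  have l1 : Tendsto (fun i => L (x * star (e i : A)) y) l (𝓝 (L x y)) :=
    tendsto_subtype_rng.2
      ((star_conv (fun i => (e i : A)) he x (hIe x x.2)).mul_const (y : A))
  have l2 := ((continuous_subtype_val.comp hφ).tendsto _).comp l1
  have l3 := (star_conv (fun i => (φ (e i) : B)) he' _ (hJe _ (φ x).2)).mul_const (φ y : B)
  refine tendsto_nhds_unique l2 (l3.congr fun i => ?_)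
  exact (htriple _ _ _).symm

lemma exists_net {A : Type u} [NonUnitalCStarAlgebra A]
    (I : Submodule ℂ A) (hIc : IsClosed (I : Set A)) (hI : ∀ a : A, ∀ x ∈ I, a * x ∈ I) :
    ∃ N : DirectedNet.{u} I, (∀ i, ‖(N.elem i : A)‖ ≤ 1) ∧
      (∀ x ∈ I, Tendsto (fun i => ‖x * (N.elem i : A) - x‖) atTop (𝓝 0)) := by
  let D : NonUnitalStarSubalgebra ℂ A :=
    { carrier := {x | x ∈ I ∧ star x ∈ I}
      add_mem' := fun {a b} ha hb => ⟨I.add_mem ha.1 hb.1, by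
        rw [star_add]; exact I.add_mem ha.2 hb.2⟩
      zero_mem' := ⟨I.zero_mem, by simp⟩
      mul_mem' := fun {a b} ha hb => ⟨hI _ _ hb.1, by rw [star_mul]; exact hI _ _ ha.2⟩
      smul_mem' := fun c x hx => ⟨I.smul_mem _ hx.1, by
        rw [star_smul]; exact I.smul_mem _ hx.2⟩
      star_mem' := fun {a} ha => ⟨ha.2, by rw [star_star]; exact ha.1⟩ }
  have hD : IsClosed (D : Set A) := hIc.inter (hIc.preimage continuous_star)
  let _ := CStarAlgebra.spectralOrder D
  have := CStarAlgebra.spectralOrderedRing D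
  let S : Type u := {x : D // x ∈ ({x : D | 0 ≤ x} ∩ Metric.ball 0 1)}
  have hdir : IsDirected S (· ≤ ·) := ⟨fun a b => by
    obtain ⟨c, hc, h1, h2⟩ := CStarAlgebra.directedOn_nonneg_ball (A := D) a.1 a.2 b.1 b.2
    exact ⟨⟨c, hc⟩, h1, h2⟩⟩
  have hne : Nonempty S := ⟨⟨0, by simp⟩⟩
  have hnorm : ∀ i : S, ‖(i.1 : A)‖ ≤ 1 := fun i => by
    have := i.2.2
    rw [mem_ball_zero_iff] at this
    exact this.le
  have hlim : Tendsto (fun i : S => i.1) atTop (CStarAlgebra.approximateUnit D) := by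
    rw [(CStarAlgebra.hasBasis_approximateUnit D).tendsto_right_iff]
    intro a ha
    filter_upwards [eventually_ge_atTop (⟨a, ha.1, by simpa using ha.2⟩ : S)] with i hi
    exact ⟨hi, by simpa using hnorm i⟩
  have hDlim : ∀ d : D, Tendsto (fun i : S => (d : A) * (i.1 : A)) atTop (𝓝 (d : A)) := by
    intro d
    have := ((CStarAlgebra.increasingApproximateUnit D).tendsto_mul_left d).comp hlim
    exact tendsto_subtype_rng.1 this
  refine ⟨{ ι := S, dir := hdir, elem := fun i => ⟨i.1, i.1.2.1⟩ }, hnorm, ?_⟩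
  intro x hx
  change Tendsto (fun i : S => ‖x * (i.1 : A) - x‖) atTop (𝓝 0)
  have hxx : star x * x ∈ D := ⟨hI _ _ hx, by simpa using hI _ _ hx⟩
  have h1 := tendsto_iff_norm_sub_tendsto_zero.1 (hDlim ⟨_, hxx⟩)
  have hsq : Tendsto (fun i : S => ‖x * (i.1 : A) - x‖ ^ 2) atTop (𝓝 0) := by
    refine squeeze_zero (fun i => by positivity) (fun i => ?_) (by simpa using h1.const_mul 2)
    have hs : star (x * (i.1 : A) - x) * (x * (i.1 : A) - x) =
        star (i.1 : A) * (star x * x * (i.1 : A) - star x * x)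
          - (star x * x * (i.1 : A) - star x * x) := by
      simp only [star_sub, star_mul, mul_sub, sub_mul, mul_assoc]
      abel
    rw [sq, ← CStarRing.norm_star_mul_self, hs]
    refine (norm_sub_le _ _).trans ?_
    have : ‖star (i.1 : A) * (star x * x * (i.1 : A) - star x * x)‖ ≤
        1 * ‖star x * x * (i.1 : A) - star x * x‖ := by
      refine (norm_mul_le _ _).trans ?_
      rw [norm_star]
      gcongr
      exact hnorm i
    linarith
  have := hsq.sqrt
  simpa using this

end helpers

theorem multiplicative_iff_maps_rcai_to_rcai
    {A : Type u} {B : Type v} [NonUnitalCStarAlgebra A] [NonUnitalCStarAlgebra B]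
    (I : Submodule ℂ A) (hIc : IsClosed (I : Set A)) (hI : ∀ a : A, ∀ x ∈ I, a * x ∈ I)
    (J : Submodule ℂ B) (hJc : IsClosed (J : Set B)) (hJ : ∀ b : B, ∀ y ∈ J, b * y ∈ J)
    (φ : I →ₗ[ℂ] J) (hbij : Function.Bijective φ)
    (hci : IsCompletelyIsometric (fun x => (φ x : B))) :
    (∀ x y z : I, (z : A) = (x : A) * (y : A) → (φ z : B) = (φ x : B) * (φ y : B)) ↔
      ∃ N : DirectedNet.{u} I,
        (∀ i, ‖(N.elem i : A)‖ ≤ 1) ∧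
        (∀ x ∈ I, Tendsto (fun i => ‖x * (N.elem i : A) - x‖) atTop (𝓝 0)) ∧
        (∀ y ∈ J, Tendsto (fun i => ‖y * (φ (N.elem i) : B) - y‖) atTop (𝓝 0)) := by
  have hcol : ∀ x y z : I,
      ‖star (φ x : B) * φ x + star (φ y : B) * φ y + star (φ z : B) * φ z‖ =
      ‖star (x : A) * x + star (y : A) * y + star (z : A) * z‖ := by
    intro x y z
    let c : Fin 3 → I := ![x, y, z]
    have h := hci 3 (Matrix.of fun i j => if j = 0 then c i else 0)
    rw [cnorm_col (fun i => (φ (c i) : B)) _ (fun i j => by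
        simp only [Matrix.map_apply, Matrix.of_apply]; split_ifs <;> simp),
      cnorm_col (fun i => (c i : A)) _ (fun i j => by
        simp only [Matrix.map_apply, Matrix.of_apply]; split_ifs <;> simp),
      Real.sqrt_inj (norm_nonneg _) (norm_nonneg _)] at h
    simpa [c, Fin.sum_univ_three] using h
  have hiso : ∀ x : I, ‖φ x‖ = ‖x‖ := by
    intro x
    have h := hcol x 0 0
    simp only [map_zero, ZeroMemClass.coe_zero, star_zero, mul_zero, add_zero,
      CStarRing.norm_star_mul_self] at h
    exact (mul_self_inj (norm_nonneg _) (norm_nonneg _)).1 h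
  constructor
  · intro hm
    obtain ⟨N, h1, h2⟩ := exists_net I hIc hI
    refine ⟨N, h1, h2, ?_⟩
    intro y hy
    obtain ⟨x, hx⟩ := hbij.2 ⟨y, hy⟩
    have hx' : y = (φ x : B) := by rw [hx]
    refine (h2 x x.2).congr (fun i => ?_)
    have e1 := hm x (N.elem i) ⟨_, hI _ _ (N.elem i).2⟩ rfl
    have e2 := hiso (⟨(x : A) * (N.elem i : A), hI _ _ (N.elem i).2⟩ - x)
    rw [map_sub, Submodule.coe_norm, Submodule.coe_norm, Submodule.coe_sub, Submodule.coe_sub,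
      e1] at e2
    rw [hx']
    exact e2.symm
  · rintro ⟨N, h1, h2, h3⟩ x y z hz
    have := N.dir
    exact mult_of_net I hI J hJ (LinearEquiv.ofBijective φ hbij) hcol hiso (l := atTop) N.elem h1
      (fun x hx => tendsto_iff_norm_sub_tendsto_zero.2 (h2 x hx))
      (fun y hy => tendsto_iff_norm_sub_tendsto_zero.2 (h3 y hy)) x y z hz
end

section
/- Let J be a closed left ideal of a C*-algebra A, let E be the closed linear span in A of {x * y* : x, y ∈ J} (a C*-subalgebra of A which contains J), let H be a complex Hilbert space, and let π : J → B(H) be a linear map. Then the following are equivalent: (a) there exists a *-homomorphism θ : E → B(H) (a non-unital star algebra homomorphism) with θ(x) = π(x) for all x ∈ J; (b) π is multiplicative (π(x * y) = π(x) ∘ π(y) for all x, y ∈ J) and a triple morphism (π(x * y* * z) = π(x) ∘ (π(y))* ∘ π(z) for all x, y, z ∈ J; note x * y* * z ∈ J). Moreover, when these hold, π is injective if and only if θ is injective, and if π is injective then π is isometric. -/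
open Filter Topology

lemma aux_qs {A : Type*} [NonUnitalCStarAlgebra A] (a : A) :
    ∀ t ∈ quasispectrum ℝ (star a * a), 0 ≤ t ∧ t ≤ ‖a‖ ^ 2 := by
  let _ := CStarAlgebra.spectralOrder A
  have _ := CStarAlgebra.spectralOrderedRing A
  intro t ht
  refine ⟨quasispectrum_nonneg_of_nonneg _ (star_mul_self_nonneg a) t ht, ?_⟩
  have := NonUnitalIsometricContinuousFunctionalCalculus.norm_quasispectrum_le (star a * a) ht
    (IsSelfAdjoint.star_mul_self a)
  rw [CStarRing.norm_star_mul_self, Real.norm_eq_abs] at this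
  nlinarith [le_abs_self t]

lemma aux_sqrt {A : Type*} [NonUnitalCStarAlgebra A] (a : A) :
    ∃ d : A, star d = d ∧ (2 * ‖a‖) • d - d * d = star a * a := by
  set p := star a * a with hp
  have hsa : IsSelfAdjoint p := IsSelfAdjoint.star_mul_self a
  let f : ℝ → ℝ := fun t => ‖a‖ - √(‖a‖ ^ 2 - t)
  have hf : Continuous f := by fun_prop
  have hf0 : f 0 = 0 := by simp [f]
  refine ⟨cfcₙ f p, ?_, ?_⟩
  · exact cfcₙ_predicate (R := ℝ) f p
  · rw [← cfcₙ_mul f f p hf.continuousOn hf0 hf.continuousOn hf0,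
      ← cfcₙ_smul (2 * ‖a‖) f p hf.continuousOn hf0,
      ← cfcₙ_sub _ _ p (by fun_prop) (by simp [hf0]) (by fun_prop) (by simp [hf0])]
    conv_rhs => rw [← cfcₙ_id' ℝ p]
    refine cfcₙ_congr fun t ht => ?_
    have h := aux_qs a t ht
    have := Real.sq_sqrt (sub_nonneg.2 h.2)
    simp only [f, smul_eq_mul]
    nlinarith

lemma aux_approx {A : Type*} [NonUnitalCStarAlgebra A] (x : A) (ε : ℝ) (hε : 0 < ε) :
    ∃ e : A, star e = e ∧ e = ε⁻¹ • (star x * x) - ε⁻¹ • (e * (star x * x)) ∧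
      ‖x - x * e‖ ^ 2 ≤ ε := by
  set p := star x * x with hp
  have hsa : IsSelfAdjoint p := IsSelfAdjoint.star_mul_self x
  let f : ℝ → ℝ := fun t => t / (ε + |t|)
  have hpos : ∀ t : ℝ, ε + |t| ≠ 0 := fun t => by positivity
  have hf : Continuous f := by
    exact continuous_id.div (by fun_prop) hpos
  have hf0 : f 0 = 0 := by simp [f]
  have hst : star (cfcₙ f p) = cfcₙ f p := cfcₙ_predicate (R := ℝ) f p
  have hfp : cfcₙ f p * p = cfcₙ (fun t => f t * t) p := by
    rw [cfcₙ_mul f (fun t => t) p hf.continuousOn hf0 (by fun_prop) rfl, cfcₙ_id' ℝ p]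
  have hpf : p * cfcₙ f p  = cfcₙ (fun t => t * f t) p := by
    rw [cfcₙ_mul (fun t => t) f p (by fun_prop) rfl hf.continuousOn hf0, cfcₙ_id' ℝ p]
  refine ⟨cfcₙ f p, hst, ?_, ?_⟩
  · rw [hfp]
    conv_rhs => enter [1]; rw [← cfcₙ_id' ℝ p]
    rw [← cfcₙ_smul _ _ p (by fun_prop) (by simp), ← cfcₙ_smul _ _ p (by fun_prop) (by simp),
      ← cfcₙ_sub _ _ p (by fun_prop) (by simp) (by fun_prop) (by simp)]
    refine cfcₙ_congr fun t ht => ?_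
    have h := aux_qs x t ht
    have := hpos t
    rw [abs_of_nonneg h.1] at this
    simp only [f, smul_eq_mul, abs_of_nonneg h.1]
    field_simp
    ring
  · rw [pow_two, ← CStarRing.norm_star_mul_self]
    have : star (x - x * cfcₙ f p) * (x - x * cfcₙ f p)
        = p - p * cfcₙ f p - (cfcₙ f p * p - cfcₙ f p * p * cfcₙ f p) := by
      generalize cfcₙ f p = e at hst
      simp only [star_sub, star_mul, hst, hp, mul_sub, sub_mul, mul_assoc]
      abel
    rw [this, hpf, hfp, ← cfcₙ_mul (fun t => f t * t) f p (by fun_prop) (by simp) hf.continuousOn hf0]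
    conv_lhs => enter [1,1,1]; rw [← cfcₙ_id' ℝ p]
    rw [← cfcₙ_sub _ _ p (by fun_prop) (by simp) (by fun_prop) (by simp),
      ← cfcₙ_sub _ _ p (by fun_prop) (by simp) (by fun_prop) (by simp),
      ← cfcₙ_sub _ _ p (by fun_prop) (by simp) (by fun_prop) (by simp)]
    refine norm_cfcₙ_le fun t ht => ?_
    have h := (aux_qs x t ht).1
    have h1 : 0 < ε + t := by linarith
    have : t - t * f t - (f t * t - f t * t * f t) = ε * (t * ε / (ε + t) ^ 2) := by
      simp only [f, abs_of_nonneg h]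
      field_simp
      ring
    rw [this, Real.norm_of_nonneg (by positivity)]
    have : t * ε / (ε + t) ^ 2 ≤ 1 := by
      rw [div_le_one (by positivity)]; nlinarith
    nlinarith

/-- `J ⊆ E` -/
lemma aux_sub {A : Type*} [NonUnitalCStarAlgebra A]
    (J : Submodule ℂ A) (hJ : ∀ a : A, ∀ x ∈ J, a * x ∈ J) :
    J ≤ (Submodule.span ℂ {z : A | ∃ x ∈ J, ∃ y ∈ J, z = x * star y}).topologicalClosure := by
  intro x hx
  rw [← SetLike.mem_coe, Submodule.topologicalClosure_coe, Metric.mem_closure_iff]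
  intro δ hδ
  obtain ⟨e, he, he2, hn⟩ := aux_approx x ((δ/2)^2) (by positivity)
  refine ⟨x * e, Submodule.subset_span ⟨x, hx, e, ?_, by rw [he]⟩, ?_⟩
  · have hp : star x * x ∈ J := hJ _ _ hx
    rw [he2]
    have hr : ∀ (r : ℝ) (y : A), y ∈ J → r • y ∈ J := fun r y hy => by
      have := J.smul_mem (r : ℂ) hy
      simpa using this
    exact J.sub_mem (hr _ _ hp) (hr _ _ (hJ _ _ hp))
  · rw [dist_eq_norm]
    have := abs_le_of_sq_le_sq hn (by positivity)
    rw [abs_of_nonneg (norm_nonneg _)] at this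
    linarith


/-- Left multiplication on the left ideal. -/
def auxL {A : Type*} [NonUnitalCStarAlgebra A]
    (J : Submodule ℂ A) (hJ : ∀ a : A, ∀ x ∈ J, a * x ∈ J) : A →ₗ[ℂ] (J →ₗ[ℂ] J) :=
  LinearMap.mk₂ ℂ (fun b w => ⟨b * w, hJ b w w.2⟩)
    (fun a b w => Subtype.ext (add_mul a b (w : A)))
    (fun c b w => Subtype.ext (smul_mul_assoc c b (w : A)))
    (fun b v w => Subtype.ext (mul_add b (v : A) (w : A)))
    (fun c b w => Subtype.ext (mul_smul_comm c b (w : A)))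

section
set_option linter.unusedSectionVars false
variable {A : Type*} [NonUnitalCStarAlgebra A]
    {H : Type*} [NormedAddCommGroup H] [InnerProductSpace ℂ H] [CompleteSpace H]
    (J : Submodule ℂ A) (hJ : ∀ a : A, ∀ x ∈ J, a * x ∈ J)
    (π : J →ₗ[ℂ] (H →L[ℂ] H))

lemma auxL_coe (b : A) (w : J) : (auxL J hJ b w : A) = b * w := rfl

lemma auxL_mul (a b : A) (w : J) : auxL J hJ (a * b) w = auxL J hJ a (auxL J hJ b w) :=
  Subtype.ext (mul_assoc a b (w : A))

/-- An operator in the span of `π(J)* π(J)` killed by `π(J)` is zero; applied to get the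
adjoint relation. -/
lemma aux_adj
    (htri : ∀ x y z w : J, (w : A) = (x : A) * star (y : A) * (z : A) →
          π w = π x * star (π y) * π z) (b : A) (w v : J) :
    star (π (auxL J hJ b w)) * π v = star (π w) * π (auxL J hJ (star b) v) := by
  set D := star (π (auxL J hJ b w)) * π v - star (π w) * π (auxL J hJ (star b) v) with hD
  have h1 : ∀ x : J, π x * D = 0 := fun x => by
    rw [hD, mul_sub, ← mul_assoc, ← mul_assoc, sub_eq_zero]
    rw [← htri x (auxL J hJ b w) v (auxL J hJ (x * star (w : A) * star b) v)
        (by simp only [auxL_coe, star_mul, mul_assoc]),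
      ← htri x w (auxL J hJ (star b) v) (auxL J hJ (x * star (w : A) * star b) v)
        (by simp only [auxL_coe, mul_assoc])]
  have h2 : star D * D = 0 := by
    conv_lhs => enter [1]; rw [hD]
    simp only [star_sub, star_mul, star_star, sub_mul, mul_assoc, h1, mul_zero, sub_zero]
  rw [← sub_eq_zero]
  exact CStarRing.star_mul_self_eq_zero_iff _ |>.1 h2

open scoped TensorProduct InnerProductSpace

/-- `w ⊗ η ↦ π(w) η`. -/
noncomputable def auxΦ : J ⊗[ℂ] H →ₗ[ℂ] H :=
  TensorProduct.lift ((ContinuousLinearMap.coeLM ℂ).comp π)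

lemma auxΦ_tmul (w : J) (η : H) : auxΦ J π (w ⊗ₜ η) = π w η := by
  simp [auxΦ]

lemma auxΦ_adj
    (htri : ∀ x y z w : J, (w : A) = (x : A) * star (y : A) * (z : A) →
          π w = π x * star (π y) * π z) (b : A) (m n : J ⊗[ℂ] H) :
    ⟪auxΦ J π ((auxL J hJ b).rTensor H m), auxΦ J π n⟫_ℂ =
      ⟪auxΦ J π m, auxΦ J π ((auxL J hJ (star b)).rTensor H n)⟫_ℂ := by
  induction m with
  | zero => simp
  | add m₁ m₂ h₁ h₂ => simp only [map_add, inner_add_left, h₁, h₂]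
  | tmul w η =>
    induction n with
    | zero => simp
    | add m₁ m₂ h₁ h₂ => simp only [map_add, inner_add_right, h₁, h₂]
    | tmul v ξ =>
      simp only [LinearMap.rTensor_tmul, auxΦ_tmul]
      rw [← ContinuousLinearMap.adjoint_inner_right, ← ContinuousLinearMap.adjoint_inner_right]
      have := congrArg (fun T : H →L[ℂ] H => T ξ) (aux_adj J hJ π htri b w v)
      simp only [mul_apply_eq_comp, ContinuousLinearMap.star_eq_adjoint] at this
      rw [this]

lemma aux_rT_mul (a b : A) (m : J ⊗[ℂ] H) :
    (auxL J hJ (a * b)).rTensor H m = (auxL J hJ a).rTensor H ((auxL J hJ b).rTensor H m) := by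
  have : auxL J hJ (a * b) = auxL J hJ a ∘ₗ auxL J hJ b := by
    ext w; simp only [LinearMap.comp_apply, auxL_mul]
  rw [this, LinearMap.rTensor_comp_apply]

lemma auxΦ_bound
    (htri : ∀ x y z w : J, (w : A) = (x : A) * star (y : A) * (z : A) →
          π w = π x * star (π y) * π z) (b : A) (m : J ⊗[ℂ] H) :
    ‖auxΦ J π ((auxL J hJ b).rTensor H m)‖ ≤ ‖b‖ * ‖auxΦ J π m‖ := by
  obtain ⟨d, hd, hd2⟩ := aux_sqrt b
  set s : ℝ := ‖b‖
  set D : J ⊗[ℂ] H := (auxL J hJ d).rTensor H m with hD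
  set B : J ⊗[ℂ] H := (auxL J hJ b).rTensor H m with hB
  -- inner products
  have e1 : ⟪auxΦ J π D, auxΦ J π D⟫_ℂ =
      ⟪auxΦ J π m, auxΦ J π ((auxL J hJ (d * d)).rTensor H m)⟫_ℂ := by
    conv_lhs => enter [2]; rw [hD]
    rw [auxΦ_adj J hJ π htri, hd, aux_rT_mul]
  have e2 : ⟪auxΦ J π B, auxΦ J π B⟫_ℂ =
      ⟪auxΦ J π m, auxΦ J π ((auxL J hJ (star b * b)).rTensor H m)⟫_ℂ := by
    conv_lhs => enter [2]; rw [hB]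
    rw [auxΦ_adj J hJ π htri, aux_rT_mul]
  have e3 : ⟪auxΦ J π D, auxΦ J π m⟫_ℂ = ⟪auxΦ J π m, auxΦ J π D⟫_ℂ := by
    rw [hD, auxΦ_adj J hJ π htri, hd]
  have e4 : ⟪auxΦ J π B, auxΦ J π B⟫_ℂ + ⟪auxΦ J π D, auxΦ J π D⟫_ℂ =
      (2 * s : ℂ) * ⟪auxΦ J π m, auxΦ J π D⟫_ℂ := by
    rw [e1, e2, ← inner_add_right, ← map_add, ← LinearMap.add_apply, ← LinearMap.rTensor_add,
      ← map_add, ← hd2, sub_add_cancel, ← inner_smul_right, hD, ← map_smul,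
      ← LinearMap.smul_apply, ← LinearMap.rTensor_smul, ← map_smul]
    congr 5
    rw [← Complex.coe_smul]; push_cast; rfl
  have e5 : ⟪(s : ℂ) • auxΦ J π m - auxΦ J π D, (s : ℂ) • auxΦ J π m - auxΦ J π D⟫_ℂ
      = (s : ℂ)^2 * ⟪auxΦ J π m, auxΦ J π m⟫_ℂ - ⟪auxΦ J π B, auxΦ J π B⟫_ℂ := by
    simp only [inner_sub_left, inner_sub_right, inner_smul_left, inner_smul_right,
      Complex.conj_ofReal, e3]
    linear_combination e4
  simp only [inner_self_eq_norm_sq_to_K] at e5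
  have e6 : ‖(s : ℂ) • auxΦ J π m - auxΦ J π D‖ ^ 2 = s ^ 2 * ‖auxΦ J π m‖ ^ 2 -
      ‖auxΦ J π B‖ ^ 2 := by
    apply Complex.ofReal_injective
    push_cast
    exact e5
  have h0 : 0 ≤ s := norm_nonneg b
  refine le_of_sq_le_sq ?_ (by positivity)
  nlinarith [sq_nonneg ‖(s : ℂ) • auxΦ J π m - auxΦ J π D‖]

/-- Induction principle on vectors. -/
lemma aux_ind (S : Submodule ℂ H) (hS : IsClosed (S : Set H))
    (h1 : ∀ (w : J) (η : H), π w η ∈ S)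
    (h2 : ∀ ζ : H, (∀ (w : J) (η : H), ⟪π w η, ζ⟫_ℂ = 0) → ζ ∈ S) (v : H) : v ∈ S := by
  let K := (Submodule.span ℂ {u : H | ∃ (w : J) (η : H), u = π w η}).topologicalClosure
  have hKS : K ≤ S := Submodule.topologicalClosure_minimal _
    (Submodule.span_le.2 (by rintro _ ⟨w, η, rfl⟩; exact h1 w η)) hS
  have hKc : IsClosed (K : Set H) := Submodule.isClosed_topologicalClosure _
  have : CompleteSpace K := hKc.completeSpace_coe
  obtain ⟨y, hy, z, hz, rfl⟩ := K.exists_add_mem_mem_orthogonal v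
  refine S.add_mem (hKS hy) (h2 z fun w η => ?_)
  exact hz _ (Submodule.le_topologicalClosure _ (Submodule.subset_span ⟨w, η, rfl⟩))

lemma aux_ext (S T : H →L[ℂ] H) (h1 : ∀ w : J, S * π w = T * π w)
    (h2 : ∀ ζ : H, (∀ (w : J) (η : H), ⟪π w η, ζ⟫_ℂ = 0) → S ζ = T ζ) : S = T := by
  ext v
  exact aux_ind J π (LinearMap.eqLocus S.toLinearMap T.toLinearMap)
    (isClosed_eq S.continuous T.continuous)
    (fun w η => congrArg (fun R : H →L[ℂ] H => R η) (h1 w)) h2 v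

lemma aux_theta1
    (htri : ∀ x y z w : J, (w : A) = (x : A) * star (y : A) * (z : A) →
          π w = π x * star (π y) * π z) (b : A) :
    ∃ T : H →L[ℂ] H, (∀ w : J, T * π w = π (auxL J hJ b w)) ∧
      ∀ ζ : H, (∀ (w : J) (η : H), ⟪π w η, ζ⟫_ℂ = 0) → T ζ = 0 := by
  let K := (LinearMap.range (auxΦ J π)).topologicalClosure
  have hKc : IsClosed (K : Set H) := Submodule.isClosed_topologicalClosure _
  have : CompleteSpace K := hKc.completeSpace_coe
  have hmem : ∀ m, auxΦ J π m ∈ K := fun m =>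
    Submodule.le_topologicalClosure _ (LinearMap.mem_range_self _ m)
  let e : J ⊗[ℂ] H →ₗ[ℂ] K := (auxΦ J π).codRestrict K hmem
  have hde : DenseRange e := by
    intro y
    rw [Topology.IsEmbedding.subtypeVal.closure_eq_preimage_closure_image]
    have : (Subtype.val '' Set.range e : Set H) = LinearMap.range (auxΦ J π) := by
      ext v; constructor
      · rintro ⟨_, ⟨m, rfl⟩, rfl⟩; exact ⟨m, rfl⟩
      · rintro ⟨m, rfl⟩; exact ⟨e m, ⟨m, rfl⟩, rfl⟩
    rw [this]
    exact y.2
  let f : J ⊗[ℂ] H →ₗ[ℂ] H := auxΦ J π ∘ₗ (auxL J hJ b).rTensor H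
  have hT := LinearMap.extendOfNorm_eq (f := f) (e := e) hde
    ⟨‖b‖, fun m => auxΦ_bound J hJ π htri b m⟩
  refine ⟨(f.extendOfNorm e).comp K.orthogonalProjectionOnto, fun w => ?_, fun ζ hζ => ?_⟩
  · ext η
    have h1 : K.orthogonalProjectionOnto (π w η) = e (w ⊗ₜ η) := by
      have h2 : π w η = (e (w ⊗ₜ η) : H) := (auxΦ_tmul J π w η).symm
      rw [h2]
      exact Submodule.orthogonalProjectionOnto_mem_subspace_eq_self _
    simp only [mul_apply_eq_comp, ContinuousLinearMap.comp_apply]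
    rw [h1, hT]
    simp [f, auxΦ_tmul]
  · have : ζ ∈ Kᗮ := by
      have hr : (LinearMap.range (auxΦ J π))ᗮ = Kᗮ := (Submodule.orthogonal_closure _).symm
      rw [← hr]
      rintro _ ⟨m, rfl⟩
      induction m with
      | zero => simp
      | add m₁ m₂ h₁ h₂ => rw [map_add, inner_add_left, h₁, h₂, add_zero]
      | tmul w η => rw [auxΦ_tmul]; exact hζ w η
    simp only [ContinuousLinearMap.comp_apply]
    rw [Submodule.orthogonalProjectionOnto_eq_zero_iff.2 this, map_zero]

lemma aux_theta (hJ : ∀ a : A, ∀ x ∈ J, a * x ∈ J)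
    (htri : ∀ x y z w : J, (w : A) = (x : A) * star (y : A) * (z : A) →
          π w = π x * star (π y) * π z)
    (hmul : ∀ x y z : J, (z : A) = (x : A) * (y : A) → π z = π x * π y) :
    ∃ θ : A →ₗ[ℂ] (H →L[ℂ] H), (∀ a b, θ (a * b) = θ a * θ b) ∧
      (∀ a, θ (star a) = star (θ a)) ∧ ∀ x : J, θ x = π x := by
  choose T hT1 hT2 using aux_theta1 J hJ π htri
  have happ : ∀ b (w : J) η, T b (π w η) = π (auxL J hJ b w) η := fun b w η =>
    congrArg (fun R : H →L[ℂ] H => R η) (hT1 b w)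
  let θ : A →ₗ[ℂ] (H →L[ℂ] H) :=
    { toFun := T
      map_add' := fun a b => aux_ext J π _ _
        (fun w => by rw [hT1, add_mul, hT1, hT1, map_add, LinearMap.add_apply, map_add])
        (fun ζ hζ => by simp [hT2 _ ζ hζ])
      map_smul' := fun c b => aux_ext J π _ _
        (fun w => by
          rw [hT1, RingHom.id_apply, smul_mul_assoc, hT1, map_smul, LinearMap.smul_apply, map_smul])
        (fun ζ hζ => by simp [hT2 _ ζ hζ]) }
  have hstar : ∀ a, T (star a) = star (T a) := by
    intro a
    have hin : ∀ (w : J) (η v : H), ⟪π (auxL J hJ (star a) w) η, v⟫_ℂ = ⟪π w η, T a v⟫_ℂ := by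
      intro w η v
      let l₁ : H →L[ℂ] ℂ := innerSL ℂ (π (auxL J hJ (star a) w) η)
      let l₂ : H →L[ℂ] ℂ := (innerSL ℂ (π w η)).comp (T a)
      have := aux_ind J π (LinearMap.eqLocus l₁.toLinearMap l₂.toLinearMap)
        (isClosed_eq l₁.continuous l₂.continuous)
        (fun u ξ => ?_) (fun ζ hζ => ?_) v
      · exact this
      · change ⟪π (auxL J hJ (star a) w) η, π u ξ⟫_ℂ = ⟪π w η, T a (π u ξ)⟫_ℂ
        rw [happ]
        have := auxΦ_adj J hJ π htri (star a) (w ⊗ₜ η) (u ⊗ₜ ξ)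
        simpa only [LinearMap.rTensor_tmul, auxΦ_tmul, star_star] using this
      · change ⟪π (auxL J hJ (star a) w) η, ζ⟫_ℂ = ⟪π w η, T a ζ⟫_ℂ
        rw [hζ, hT2 a ζ hζ, inner_zero_right]
    refine aux_ext J π _ _ (fun w => ?_) (fun ζ hζ => ?_)
    · ext η
      refine ext_inner_right ℂ fun v => ?_
      simp only [mul_apply_eq_comp, ContinuousLinearMap.star_eq_adjoint,
        ContinuousLinearMap.adjoint_inner_left, happ, hin]
    · rw [hT2 _ ζ hζ]
      refine ext_inner_right ℂ fun v => ?_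
      rw [ContinuousLinearMap.star_eq_adjoint, ContinuousLinearMap.adjoint_inner_left,
        inner_zero_left]
      let l : H →L[ℂ] ℂ := (innerSL ℂ ζ).comp (T a)
      have := aux_ind J π (LinearMap.ker l.toLinearMap)
        l.isClosed_ker
        (fun u ξ => ?_) (fun ζ' hζ' => ?_) v
      · exact this.symm
      · change ⟪ζ, T a (π u ξ)⟫_ℂ = 0
        rw [happ, inner_eq_zero_symm]
        exact hζ _ _
      · change ⟪ζ, T a ζ'⟫_ℂ = 0
        rw [hT2 a ζ' hζ', inner_zero_right]
  refine ⟨θ, fun a b => ?_, hstar, fun x => ?_⟩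
  · refine aux_ext J π (T (a * b)) (T a * T b) (fun w => ?_) (fun ζ hζ => ?_)
    · rw [mul_assoc, hT1, hT1, hT1, auxL_mul]
    · simp [hT2 _ ζ hζ]
  · change T x = π x
    set β := π x - T x with hβ
    have hβw : ∀ w : J, β * π w = 0 := fun w => by
      rw [hβ, sub_mul, hT1, sub_eq_zero, hmul x w (auxL J hJ x w) rfl]
    have hTβ : T x * star β = 0 := by
      ext u
      refine hT2 _ _ fun w η => ?_
      have h6 := ContinuousLinearMap.adjoint_inner_right β (π w η) u
      have h7 : β (π w η) = 0 := congrArg (fun R : H →L[ℂ] H => R η) (hβw w)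
      rw [h7, inner_zero_left] at h6
      exact h6
    have hββ : ∀ w : J, β * star β * π w = 0 := fun w => by
      have : β * star β = π x * star (π x) - π x * T (star (x : A)) := by
        conv_lhs => enter [1]; rw [hβ]
        rw [sub_mul, hTβ, sub_zero, hβ, star_sub, mul_sub, hstar]
      rw [this, sub_mul, mul_assoc (π x) (T _), hT1, sub_eq_zero,
        ← htri x x w (auxL J hJ (x * star (x : A)) w) rfl]
      exact hmul _ _ _ (by simp only [auxL_coe, mul_assoc])
    have h3 : β * star β * β = 0 := by
      conv_lhs => enter [2]; rw [hβ]
      rw [mul_sub, hββ, zero_sub, neg_eq_zero]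
      refine aux_ext J π _ _ (fun w => ?_) (fun ζ hζ => ?_)
      · rw [mul_assoc, hT1, hββ, zero_mul]
      · rw [mul_apply_eq_comp, hT2 _ ζ hζ, map_zero, zero_apply]
    have h4 : star (star β * β) * (star β * β) = 0 := by
      rw [star_mul, star_star]
      have : star β * β * (star β * β) = star β * (β * star β * β) := by simp only [mul_assoc]
      rw [this, h3, mul_zero]
    have h5 := (CStarRing.star_mul_self_eq_zero_iff _).1 ((CStarRing.star_mul_self_eq_zero_iff _).1 h4)
    rw [hβ, sub_eq_zero] at h5
    exact h5.symm

end


/-- Induction on the closed span. -/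
lemma auxE_ind {A : Type*} [NonUnitalCStarAlgebra A] (J E S : Submodule ℂ A)
    (hE : E = (Submodule.span ℂ {z : A | ∃ x ∈ J, ∃ y ∈ J, z = x * star y}).topologicalClosure)
    (hS : IsClosed (S : Set A)) (h : ∀ x ∈ J, ∀ y ∈ J, x * star y ∈ S) : E ≤ S := by
  rw [hE]
  exact Submodule.topologicalClosure_minimal _
    (Submodule.span_le.2 (by rintro _ ⟨x, hx, y, hy, rfl⟩; exact h x hx y hy)) hS

lemma auxE_gen {A : Type*} [NonUnitalCStarAlgebra A] (J E : Submodule ℂ A)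
    (hE : E = (Submodule.span ℂ {z : A | ∃ x ∈ J, ∃ y ∈ J, z = x * star y}).topologicalClosure)
    {x y : A} (hx : x ∈ J) (hy : y ∈ J) : x * star y ∈ E := by
  rw [hE]
  exact Submodule.le_topologicalClosure _ (Submodule.subset_span ⟨x, hx, y, hy, rfl⟩)

lemma auxE_closed {A : Type*} [NonUnitalCStarAlgebra A] (J E : Submodule ℂ A)
    (hE : E = (Submodule.span ℂ {z : A | ∃ x ∈ J, ∃ y ∈ J, z = x * star y}).topologicalClosure) :
    IsClosed (E : Set A) := by
  rw [hE]; exact Submodule.isClosed_topologicalClosure _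

lemma auxE_mul {A : Type*} [NonUnitalCStarAlgebra A] (J E : Submodule ℂ A)
    (hJ : ∀ a : A, ∀ x ∈ J, a * x ∈ J)
    (hE : E = (Submodule.span ℂ {z : A | ∃ x ∈ J, ∃ y ∈ J, z = x * star y}).topologicalClosure)
    (a : A) {z : A} (hz : z ∈ E) : a * z ∈ E := by
  have := auxE_ind J E (E.comap (LinearMap.mulLeft ℂ a)) hE
    ((auxE_closed J E hE).preimage (continuous_const.mul continuous_id)) (fun x hx y hy => by
      rw [Submodule.mem_comap, LinearMap.mulLeft_apply, ← mul_assoc]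
      exact auxE_gen J E hE (hJ a x hx) hy)
  exact this hz

lemma auxE_star {A : Type*} [NonUnitalCStarAlgebra A] (J E : Submodule ℂ A)
    (hE : E = (Submodule.span ℂ {z : A | ∃ x ∈ J, ∃ y ∈ J, z = x * star y}).topologicalClosure)
    {z : A} (hz : z ∈ E) : star z ∈ E := by
  let S : Submodule ℂ A :=
    { carrier := {z | star z ∈ E}
      add_mem' := fun {a b} ha hb => by
        simp only [Set.mem_ofPred_eq, star_add] at *; exact E.add_mem ha hb
      zero_mem' := by simp
      smul_mem' := fun c a ha => by
        simp only [Set.mem_ofPred_eq, star_smul] at *; exact E.smul_mem _ ha }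
  have := auxE_ind J E S hE ((auxE_closed J E hE).preimage continuous_star) (fun x hx y hy => by
      change star (x * star y) ∈ E
      rw [star_mul, star_star]
      exact auxE_gen J E hE hy hx)
  exact this hz

lemma auxE_isom {A : Type*} [NonUnitalCStarAlgebra A]
    {H : Type*} [NormedAddCommGroup H] [InnerProductSpace ℂ H] [CompleteSpace H]
    (E : Submodule ℂ A) (hc : IsClosed (E : Set A)) (hm : ∀ a z, z ∈ E → a * z ∈ E)
    (hs : ∀ z ∈ E, star z ∈ E) (θ : E →ₗ[ℂ] (H →L[ℂ] H))
    (h1 : ∀ z w zw : E, (zw : A) = (z : A) * (w : A) → θ zw = θ z * θ w)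
    (h2 : ∀ z w : E, (w : A) = star (z : A) → θ w = star (θ z))
    (hinj : Function.Injective θ) (z : E) : ‖θ z‖ = ‖(z : A)‖ := by
  let S : NonUnitalStarSubalgebra ℂ A :=
    { E with
      mul_mem' := fun {a b} _ hb => hm a b hb
      star_mem' := fun {a} ha => hs a ha }
  have : IsClosed (S : Set A) := hc
  let φ : S →⋆ₙₐ[ℂ] (H →L[ℂ] H) :=
    { toFun := fun z => θ ⟨z.1, z.2⟩
      map_smul' := fun c z => θ.map_smul c ⟨z.1, z.2⟩
      map_zero' := θ.map_zero
      map_add' := fun z w => θ.map_add ⟨z.1, z.2⟩ ⟨w.1, w.2⟩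
      map_mul' := fun z w => h1 ⟨z.1, z.2⟩ ⟨w.1, w.2⟩ _ rfl
      map_star' := fun z => h2 ⟨z.1, z.2⟩ _ rfl }
  have hφ : Function.Injective φ := fun a b hab => Subtype.ext (Subtype.mk.inj (hinj hab))
  let z' : S := ⟨z.1, z.2⟩
  exact NonUnitalStarAlgHom.norm_map φ hφ z'

theorem ideal_homomorphism_characterization
    {A : Type*} [NonUnitalCStarAlgebra A]
    {H : Type*} [NormedAddCommGroup H] [InnerProductSpace ℂ H] [CompleteSpace H]
    (J : Submodule ℂ A) (hJc : IsClosed (J : Set A)) (hJ : ∀ a : A, ∀ x ∈ J, a * x ∈ J)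
    (E : Submodule ℂ A)
    (hE : E = (Submodule.span ℂ {z : A | ∃ x ∈ J, ∃ y ∈ J, z = x * star y}).topologicalClosure)
    (π : J →ₗ[ℂ] (H →L[ℂ] H)) :
    -- (a) ↔ (b)
    ((∃ θ : E →ₗ[ℂ] (H →L[ℂ] H),
        (∀ z w zw : E, (zw : A) = (z : A) * (w : A) → θ zw = θ z * θ w) ∧
        (∀ z w : E, (w : A) = star (z : A) → θ w = star (θ z)) ∧
        (∀ (x : J) (hx : (x : A) ∈ E), θ ⟨(x : A), hx⟩ = π x)) ↔
      ((∀ x y z : J, (z : A) = (x : A) * (y : A) → π z = π x * π y) ∧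
       (∀ x y z w : J, (w : A) = (x : A) * star (y : A) * (z : A) →
          π w = π x * star (π y) * π z))) ∧
    -- moreover, for any such θ: π injective ↔ θ injective, and injective → isometric
    (∀ θ : E →ₗ[ℂ] (H →L[ℂ] H),
      (∀ z w zw : E, (zw : A) = (z : A) * (w : A) → θ zw = θ z * θ w) →
      (∀ z w : E, (w : A) = star (z : A) → θ w = star (θ z)) →
      (∀ (x : J) (hx : (x : A) ∈ E), θ ⟨(x : A), hx⟩ = π x) →
      ((Function.Injective π ↔ Function.Injective θ) ∧
       (Function.Injective π → ∀ x : J, ‖π x‖ = ‖(x : A)‖))) := by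
  have hJE : ∀ x : J, (x : A) ∈ E := fun x => by rw [hE]; exact aux_sub J hJ x.2
  have hm : ∀ a z, z ∈ E → a * z ∈ E := fun a z hz => auxE_mul J E hJ hE a hz
  have hs : ∀ z ∈ E, star z ∈ E := fun z hz => auxE_star J E hE hz
  refine ⟨⟨?_, ?_⟩, ?_⟩
  · rintro ⟨θ, h1, h2, h3⟩
    refine ⟨fun x y z h => ?_, fun x y z w h => ?_⟩
    · rw [← h3 x (hJE x), ← h3 y (hJE y), ← h3 z (hJE z)]
      exact h1 _ _ _ h
    · rw [← h3 x (hJE x), ← h3 y (hJE y), ← h3 z (hJE z), ← h3 w (hJE w)]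
      rw [← h2 _ ⟨star (y : A), hs _ (hJE y)⟩ rfl,
        ← h1 _ _ ⟨(x : A) * star (y : A), auxE_gen J E hE x.2 y.2⟩ rfl]
      exact h1 _ _ _ h
  · rintro ⟨hmul, htri⟩
    obtain ⟨θ, h1, h2, h3⟩ := aux_theta J π hJ htri hmul
    refine ⟨θ.comp E.subtype, fun z w zw h => ?_, fun z w h => ?_, fun x hx => h3 x⟩
    · simp [h, h1]
    · simp [h, h2]
  · intro θ h1 h2 h3
    have hiff : Function.Injective π ↔ Function.Injective θ := by
      constructor
      · intro hπ
        rw [injective_iff_map_eq_zero]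
        intro z hz
        have hzw : ∀ w ∈ J, (z : A) * w = 0 := fun w hw => by
          have hzw : (z : A) * w ∈ J := hJ _ _ hw
          have : π ⟨(z : A) * w, hzw⟩ = 0 := by
            rw [← h3 _ (hJE ⟨_, hzw⟩), h1 z ⟨w, hJE ⟨w, hw⟩⟩ _ rfl, hz, zero_mul]
          have := hπ (this.trans π.map_zero.symm)
          exact congrArg Subtype.val this
        have hle := auxE_ind J E (LinearMap.ker (LinearMap.mulLeft ℂ (z : A))) hE
          (isClosed_eq (continuous_const.mul continuous_id) continuous_const)
          (fun x hx y hy => by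
            rw [LinearMap.mem_ker, LinearMap.mulLeft_apply, ← mul_assoc, hzw x hx, zero_mul])
        have h0 : (z : A) * star (z : A) = 0 := hle (hs _ z.2)
        exact Subtype.ext ((CStarRing.mul_star_self_eq_zero_iff _).1 h0)
      · intro hθ x y hxy
        rw [← h3 x (hJE x), ← h3 y (hJE y)] at hxy
        exact Subtype.ext (Subtype.mk.inj (hθ hxy))
    refine ⟨hiff, fun hπ x => ?_⟩
    rw [← h3 x (hJE x)]
    exact auxE_isom E (auxE_closed J E hE) hm hs θ h1 h2 (hiff.1 hπ) _
end
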